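/- arXiv:2403.11436 — 3 statements merged into one kernel-verified Lean document; each statement's English description precedes it below -/
import Mathlib

section
/- Suppose q is even (characteristic 2), θ ∈ 𝔽_q with θ ≠ 0, and r ≥ 3. Let w = (w_0, …, w_{r-1}) ∈ 𝔽_q^r and x_1, …, x_{r-1} ∈ 𝔽_q. Define f = Σ_{i=0}^{r-2} w_i S_i(x_1, …, x_{r-2}), g = Σ_{i=1}^{r-2} w_i S_{i-1}(x_1, …, x_{r-2}), and h = Σ_{i=2}^{r-2} w_i S_{i-2}(x_1, …, x_{r-2}) + θ^{-1} w_{r-1}. Then det(c_{r,θ}(x_1) | c_{r,θ}(x_2) | ⋯ | c_{r,θ}(x_{r-1}) | w^T) = θ · V(x_1, …, x_{r-1}) · ( f·x_{r-1}^2 + (θ^{-1} + Σ_{i=1}^{r-2} x_i)·(f·x_{r-1} + g) + h ). -/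
/-!
The determinant is computed by row operations that turn the matrix into a block triangular one.

Write `y = x_{r-1}`, `p = ∏_{j ≤ r-2} (X - x_j)` and `σ = ∑_{j ≤ r-2} x_j`. If the coefficients of a
polynomial `P` of degree at most `r` satisfy `P_r = -θ P_{r-1}`, then the row vector
`(P_0, …, P_{r-1})` sends `c_{r,θ}(a)` to `P(a)` (`sum_coeff_mul_crv`). This applies to
`1, X, …, X^{r-3}`, to `p`, and to `p · X · ((1 - θ σ) - θ X)`; together their coefficient vectors
form a lower unitriangular matrix (`det_coeffMat`). Since the last two polynomials vanish at
`x_1, …, x_{r-2}`, multiplying by this matrix leaves a Vandermonde block in `x_1, …, x_{r-2}` and a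
`2 × 2` block in the columns of `y` and `w` (`det_eq`). The factor `p(y)` of the latter completes
the Vandermonde product (`prod_Ioi_succ`), and the remaining factor is the stated quadratic
expression once signs are dropped in characteristic two.
-/


open Polynomial Finset

/-- The column vector `c_{r,θ}(a) = (1, a, …, a^{r-2}, a^{r-1} - θ a^r)ᵀ ∈ 𝔽_q^r`. -/
def crv (F : Type*) [Field F] (r : ℕ) (θ a : F) : Fin r → F :=
  fun i => if (i : ℕ) = r - 1 then a ^ (r - 1) - θ * a ^ r else a ^ (i : ℕ)

/-- `S_i(x_1, …, x_n)`: the coefficient of `X^i` in `∏_{j=1}^n (X - x_j)`. -/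
noncomputable def Scoef {F : Type*} [Field F] {n : ℕ} (x : Fin n → F) (i : ℕ) : F :=
  (∏ j, (Polynomial.X - Polynomial.C (x j))).coeff i

/-- The first `r - 2` of the `r - 1` variables `x_1, …, x_{r-1}`. -/
def xtr {F : Type*} [Field F] {r : ℕ} (x : Fin (r - 1) → F) : Fin (r - 2) → F :=
  fun j => x (Fin.castLE (by omega) j)

/-- `f = Σ_{i=0}^{r-2} w_i S_i(x_1, …, x_{r-2})`. -/
noncomputable def fpoly {F : Type*} [Field F] {r : ℕ} (w : Fin r → F)
    (x : Fin (r - 1) → F) : F :=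
  ∑ i : Fin (r - 1), w (Fin.castLE (by omega) i) * Scoef (xtr x) (i : ℕ)

/-- `g = Σ_{i=1}^{r-2} w_i S_{i-1}(x_1, …, x_{r-2})`. -/
noncomputable def gpoly {F : Type*} [Field F] {r : ℕ} (w : Fin r → F)
    (x : Fin (r - 1) → F) : F :=
  ∑ i : Fin (r - 2), w ⟨(i : ℕ) + 1, by have := i.isLt; omega⟩ * Scoef (xtr x) (i : ℕ)

/-- `h = Σ_{i=2}^{r-2} w_i S_{i-2}(x_1, …, x_{r-2}) + θ⁻¹ w_{r-1}`. -/
noncomputable def hpoly {F : Type*} [Field F] {r : ℕ} (θ : F) (w : Fin r → F)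
    (x : Fin (r - 1) → F) : F :=
  (∑ i : Fin (r - 3), w ⟨(i : ℕ) + 2, by have := i.isLt; omega⟩ * Scoef (xtr x) (i : ℕ))
    + θ⁻¹ * (if h : r - 1 < r then w ⟨r - 1, h⟩ else 0)

/-- On a polynomial of degree at most `r = k + 3` whose top two coefficients are in the ratio
prescribed by `c_{r,θ}`, pairing the lower coefficients with `c_{r,θ}(a)` is evaluation at `a`. -/
lemma sum_coeff_mul_crv {F : Type*} [Field F] (k : ℕ) (θ a : F) (P : F[X])
    (hP : P.natDegree ≤ k + 3) (h : P.coeff (k + 3) = -θ * P.coeff (k + 2)) :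
    ∑ l : Fin (k + 3), P.coeff l * crv F (k + 3) θ a l = P.eval a := by
  rw [Polynomial.eval_eq_sum_range' (Nat.lt_succ_of_le hP), Finset.sum_range_succ,
    Finset.sum_range_succ, h, Fin.sum_univ_castSucc, Finset.sum_range]
  have h1 : ∀ i : Fin (k + 2), crv F (k + 3) θ a i.castSucc = a ^ (i : ℕ) := by
    intro i
    have := i.isLt
    simp [crv, this.ne]
  simp only [h1]
  simp [crv]
  ring

/-- `∏_j (X - z_j)`. -/
noncomputable def rootPoly {F : Type*} [Field F] {n : ℕ} (z : Fin n → F) : F[X] :=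
  ∏ j, (X - C (z j))

lemma rootPoly_monic {F : Type*} [Field F] {n : ℕ} (z : Fin n → F) : (rootPoly z).Monic :=
  monic_prod_of_monic _ _ fun j _ => monic_X_sub_C (z j)

lemma rootPoly_natDegree {F : Type*} [Field F] {n : ℕ} (z : Fin n → F) :
    (rootPoly z).natDegree = n := by
  simp [rootPoly, natDegree_prod_of_monic, monic_X_sub_C]

lemma rootPoly_coeff {F : Type*} [Field F] {n : ℕ} (z : Fin (n + 1) → F) :
    (rootPoly z).coeff n = -∑ j, z j := by
  have h := Polynomial.prod_X_sub_C_coeff_card_pred (Finset.univ : Finset (Fin (n + 1))) z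
    (by simp)
  simpa [rootPoly] using h

lemma rootPoly_coeff_self {F : Type*} [Field F] {n : ℕ} (z : Fin n → F) :
    (rootPoly z).coeff n = 1 := by
  have := rootPoly_monic z
  rwa [Monic, leadingCoeff, rootPoly_natDegree] at this

lemma rootPoly_coeff_eq_zero {F : Type*} [Field F] {n m : ℕ} (z : Fin n → F) (h : n < m) :
    (rootPoly z).coeff m = 0 :=
  coeff_eq_zero_of_natDegree_lt (by rwa [rootPoly_natDegree])

/-- The linear factor multiplying `p · X` in the last row polynomial; its coefficients are the ones
for which the top two coefficients of the product are `-θ` and `1`. -/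
noncomputable def quadPoly {F : Type*} [Field F] {n : ℕ} (θ : F) (z : Fin n → F) : F[X] :=
  C (1 - θ * ∑ j, z j) - C θ * X

lemma coeff_mul_quadPoly {F : Type*} [Field F] {n : ℕ} (θ : F) (z : Fin n → F) (m : ℕ) :
    (rootPoly z * X * quadPoly θ z).coeff (m + 2) =
      (1 - θ * ∑ j, z j) * (rootPoly z).coeff (m + 1) - θ * (rootPoly z).coeff m := by
  have : rootPoly z * X * quadPoly θ z = C (1 - θ * ∑ j, z j) * (rootPoly z * X)
      - C θ * (rootPoly z * X * X) := by
    rw [quadPoly]; ring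
  rw [this, coeff_sub, coeff_C_mul, coeff_C_mul, coeff_mul_X, coeff_mul_X, coeff_mul_X]

lemma coeff_one_mul_quadPoly {F : Type*} [Field F] {n : ℕ} (θ : F) (z : Fin n → F) :
    (rootPoly z * X * quadPoly θ z).coeff 1 = (1 - θ * ∑ j, z j) * (rootPoly z).coeff 0 := by
  have : rootPoly z * X * quadPoly θ z = rootPoly z * quadPoly θ z * X := by ring
  rw [this, coeff_mul_X, mul_coeff_zero, mul_comm]
  simp [quadPoly]

lemma coeff_zero_mul_quadPoly {F : Type*} [Field F] {n : ℕ} (θ : F) (z : Fin n → F) :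
    (rootPoly z * X * quadPoly θ z).coeff 0 = 0 := by
  simp

/-- The polynomials whose coefficient vectors are the row operations:
`1, X, …, X^k, p, p · X · ((1 - θ σ) - θ X)`. -/
noncomputable def rowPoly {F : Type*} [Field F] {k : ℕ} (θ : F) (z : Fin (k + 1) → F)
    (i : Fin (k + 3)) : F[X] :=
  if (i : ℕ) ≤ k then X ^ (i : ℕ) else
    if (i : ℕ) = k + 1 then rootPoly z else rootPoly z * X * quadPoly θ z

lemma rowPoly_natDegree {F : Type*} [Field F] {k : ℕ} (θ : F) (z : Fin (k + 1) → F)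
    (i : Fin (k + 3)) : (rowPoly θ z i).natDegree ≤ k + 3 := by
  unfold rowPoly
  split_ifs with h1 h2
  · rw [natDegree_X_pow]; omega
  · rw [rootPoly_natDegree]; omega
  · refine natDegree_mul_le.trans ?_
    have h3 : (quadPoly θ z).natDegree ≤ 1 := by unfold quadPoly; compute_degree
    have h4 : (rootPoly z * X).natDegree ≤ k + 1 + 1 :=
      natDegree_mul_le.trans (by rw [rootPoly_natDegree, natDegree_X])
    omega

lemma rowPoly_coeff_top {F : Type*} [Field F] {k : ℕ} (θ : F) (z : Fin (k + 1) → F)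
    (i : Fin (k + 3)) :
    (rowPoly θ z i).coeff (k + 3) = -θ * (rowPoly θ z i).coeff (k + 2) := by
  unfold rowPoly
  split_ifs with h1 h2
  · rw [coeff_X_pow, coeff_X_pow, if_neg (by omega), if_neg (by omega), mul_zero]
  · rw [rootPoly_coeff_eq_zero z (by omega), rootPoly_coeff_eq_zero z (by omega), mul_zero]
  · rw [coeff_mul_quadPoly, coeff_mul_quadPoly, rootPoly_coeff, rootPoly_coeff_self,
      rootPoly_coeff_eq_zero z (by omega)]
    ring

/-- The row operations form a lower unitriangular matrix. -/
lemma det_coeffMat {F : Type*} [Field F] {k : ℕ} (θ : F) (z : Fin (k + 1) → F) :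
    (Matrix.of fun i j : Fin (k + 3) => (rowPoly θ z i).coeff j).det = 1 := by
  rw [Matrix.det_of_isLowerTriangular]
  · refine Finset.prod_eq_one fun i _ => ?_
    simp only [Matrix.of_apply, rowPoly]
    split_ifs with h1 h2
    · simp
    · rw [h2, rootPoly_coeff_self]
    · have h3 : (i : ℕ) = k + 2 := by omega
      rw [h3, coeff_mul_quadPoly, rootPoly_coeff, rootPoly_coeff_self]
      ring
  · intro i j hij
    have hij' : (i : ℕ) < j := hij
    simp only [Matrix.of_apply, rowPoly]
    split_ifs with h1 h2
    · rw [coeff_X_pow, if_neg (by omega)]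
    · exact rootPoly_coeff_eq_zero z (by omega)
    · omega

lemma prod_Ioi_succ {F : Type*} [Field F] {n : ℕ} (x : Fin (n + 1) → F) :
    ∏ i : Fin (n + 1), ∏ j ∈ Finset.Ioi i, (x j - x i) =
      (∏ i : Fin n, ∏ j ∈ Finset.Ioi i, (x j.castSucc - x i.castSucc)) *
        (rootPoly fun i : Fin n => x i.castSucc).eval (x (Fin.last n)) := by
  have h : ∀ (m : ℕ) (f : Fin m → Fin m → F) (i : Fin m),
      ∏ j ∈ Finset.Ioi i, f i j = ∏ j, if i < j then f i j else 1 := by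
    intro m f i
    rw [← Finset.prod_filter]
    congr 1
    ext j; simp
  rw [Finset.prod_congr rfl fun i _ => h _ (fun i j => x j - x i) i,
    Finset.prod_congr rfl fun i _ => h _ (fun i j : Fin n => x j.castSucc - x i.castSucc) i,
    Fin.prod_univ_castSucc]
  simp only [Fin.prod_univ_castSucc (n := n)]
  have hn : ∀ i : Fin n, ¬ Fin.last n < i.castSucc := fun i => (Fin.le_last _).not_gt
  simp [rootPoly, eval_prod, Finset.prod_mul_distrib, Fin.castSucc_lt_last, hn]

/-- The determinant formula in arbitrary characteristic, in terms of the pairings of `w` with the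
coefficients of the last two row polynomials. -/
lemma det_eq {F : Type*} [Field F] (k : ℕ) (θ : F) (w : Fin (k + 3) → F) (x : Fin (k + 2) → F) :
    let z : Fin (k + 1) → F := fun i => x i.castSucc
    let y := x (Fin.last (k + 1))
    (Matrix.of fun i j : Fin (k + 3) =>
        if h : (j : ℕ) < k + 2 then crv F (k + 3) θ (x ⟨j, h⟩) i else w i).det
      = (∏ i : Fin (k + 2), ∏ j ∈ Finset.Ioi i, (x j - x i)) *
        ((∑ l : Fin (k + 3), (rootPoly z * X * quadPoly θ z).coeff l * w l)
          - y * (1 - θ * (∑ j, z j) - θ * y) * ∑ l : Fin (k + 3), (rootPoly z).coeff l * w l) := by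
  intro z y
  set M := Matrix.of fun i j : Fin (k + 3) =>
        if h : (j : ℕ) < k + 2 then crv F (k + 3) θ (x ⟨j, h⟩) i else w i with hM
  set L := Matrix.of fun i j : Fin (k + 3) => (rowPoly θ z i).coeff j with hL
  have hdet : M.det = (L * M).det := by rw [Matrix.det_mul, hL, det_coeffMat, one_mul]
  have hcol : ∀ i (j : Fin (k + 2)), (L * M) i j.castSucc = (rowPoly θ z i).eval (x j) := by
    intro i j
    rw [Matrix.mul_apply, ← sum_coeff_mul_crv k θ (x j) _ (rowPoly_natDegree θ z i)
      (rowPoly_coeff_top θ z i)]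
    refine Finset.sum_congr rfl fun l _ => ?_
    have := j.isLt
    simp [hL, hM]
  have hlast : ∀ i, (L * M) i (Fin.last (k + 2)) =
      ∑ l : Fin (k + 3), (rowPoly θ z i).coeff l * w l := by
    intro i
    rw [Matrix.mul_apply]
    simp [hL, hM]
  have hz : ∀ j, (rootPoly z).eval (z j) = 0 := by
    intro j
    rw [rootPoly, eval_prod]
    exact Finset.prod_eq_zero (Finset.mem_univ j) (by simp)
  let e : Fin (k + 1) ⊕ Fin 2 ≃ Fin (k + 3) := finSumFinEquiv
  have he1 : ∀ j : Fin (k + 1), e (Sum.inl j) = j.castSucc.castSucc := fun j => rfl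
  have he2 : e (Sum.inr 0) = (Fin.last (k + 1)).castSucc := rfl
  have he3 : e (Sum.inr 1) = Fin.last (k + 2) := rfl
  have hr1 : ∀ j : Fin (k + 1), rowPoly θ z (e (Sum.inl j)) = X ^ (j : ℕ) := by
    intro j
    have := j.isLt
    rw [he1, rowPoly, if_pos (by simp; omega)]
    simp
  have hr2 : rowPoly θ z (e (Sum.inr 0)) = rootPoly z := by
    rw [he2, rowPoly, if_neg (by simp), if_pos (by simp)]
  have hr3 : rowPoly θ z (e (Sum.inr 1)) = rootPoly z * X * quadPoly θ z := by
    rw [he3, rowPoly, if_neg (by simp), if_neg (by simp)]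
  set N := (L * M).submatrix e e with hN
  have hblock : N = Matrix.fromBlocks (Matrix.vandermonde z).transpose N.toBlocks₁₂ 0
      N.toBlocks₂₂ := by
    conv_lhs => rw [← Matrix.fromBlocks_toBlocks N]
    congr 1
    · ext i j
      simp only [Matrix.toBlocks₁₁, Matrix.of_apply, hN, Matrix.submatrix_apply]
      rw [he1 j, hcol, hr1]
      simp [z]
    · ext i j
      simp only [Matrix.toBlocks₂₁, Matrix.of_apply, hN, Matrix.submatrix_apply]
      rw [he1 j, hcol]
      have hzj : (rootPoly z).eval (x j.castSucc) = 0 := hz j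
      fin_cases i
      · simp only [Fin.zero_eta]
        rw [hr2, hzj]; rfl
      · simp only [Fin.mk_one]
        rw [hr3, eval_mul, eval_mul, hzj]; simp
  have h22 : N.toBlocks₂₂.det = (rootPoly z).eval y *
      (∑ l : Fin (k + 3), (rootPoly z * X * quadPoly θ z).coeff l * w l) -
      (∑ l : Fin (k + 3), (rootPoly z).coeff l * w l) *
      ((rootPoly z).eval y * y * (1 - θ * (∑ j, z j) - θ * y)) := by
    rw [Matrix.det_fin_two]
    simp only [Matrix.toBlocks₂₂, Matrix.of_apply, hN, Matrix.submatrix_apply]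
    have g00 : (L * M) (e (Sum.inr 0)) (e (Sum.inr 0)) = (rootPoly z).eval y := by
      rw [← hr2]; exact hcol _ (Fin.last (k + 1))
    have g10 : (L * M) (e (Sum.inr 1)) (e (Sum.inr 0)) =
        (rootPoly z * X * quadPoly θ z).eval y := by
      rw [← hr3]; exact hcol _ (Fin.last (k + 1))
    have g01 : (L * M) (e (Sum.inr 0)) (e (Sum.inr 1)) =
        ∑ l : Fin (k + 3), (rootPoly z).coeff l * w l := by
      rw [← hr2]; exact hlast _
    have g11 : (L * M) (e (Sum.inr 1)) (e (Sum.inr 1)) =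
        ∑ l : Fin (k + 3), (rootPoly z * X * quadPoly θ z).coeff l * w l := by
      rw [← hr3]; exact hlast _
    rw [g00, g10, g01, g11]
    simp [quadPoly, eval_finsetSum]
  rw [hdet, ← Matrix.det_submatrix_equiv_self e, ← hN, hblock, Matrix.det_fromBlocks_zero₂₁, h22,
    Matrix.det_transpose, Matrix.det_vandermonde, prod_Ioi_succ x]
  simp only [z, y]
  ring

/-- For even `q` (characteristic 2), `θ ≠ 0`, `r ≥ 3`, `w ∈ 𝔽_q^r` and
`x_1, …, x_{r-1} ∈ 𝔽_q`:
`det(c_{r,θ}(x_1) | ⋯ | c_{r,θ}(x_{r-1}) | wᵀ)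
  = θ · V(x_1, …, x_{r-1}) · (f·x_{r-1}² + (θ⁻¹ + Σ_{i=1}^{r-2} x_i)·(f·x_{r-1} + g) + h)`. -/
theorem det_formula_char_two {F : Type*} [Field F] [Fintype F] [DecidableEq F] [CharP F 2]
    (r : ℕ) (hr : 3 ≤ r) (θ : F) (hθ : θ ≠ 0) (w : Fin r → F) (x : Fin (r - 1) → F) :
    (Matrix.of fun i j : Fin r =>
        if h : (j : ℕ) < r - 1 then crv F r θ (x ⟨j, h⟩) i else w i).det
      = θ * (∏ i : Fin (r - 1), ∏ j ∈ Finset.Ioi i, (x j - x i)) *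
        (fpoly w x * x ⟨r - 2, by omega⟩ ^ 2
          + (θ⁻¹ + ∑ i : Fin (r - 2), xtr x i) * (fpoly w x * x ⟨r - 2, by omega⟩ + gpoly w x)
          + hpoly θ w x) := by
  obtain ⟨k, rfl⟩ : ∃ k, r = k + 3 := ⟨r - 3, by omega⟩
  have key := det_eq k θ w x
  dsimp only at key
  refine key.trans ?_
  set z : Fin (k + 1) → F := fun i => x i.castSucc with hz
  have hxtr : (xtr x : Fin (k + 1) → F) = z := rfl
  have hf : ∑ l : Fin (k + 3), (rootPoly z).coeff l * w l = fpoly w x := by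
    rw [Fin.sum_univ_castSucc, Fin.val_last, rootPoly_coeff_eq_zero z (by omega), zero_mul,
      add_zero]
    exact Finset.sum_congr rfl fun i _ => mul_comm _ _
  have hg : gpoly w x = w 1 * (rootPoly z).coeff 0
      + ∑ i : Fin k, w i.succ.castSucc.succ * (rootPoly z).coeff (i + 1) :=
    Fin.sum_univ_succ (n := k)
      (fun i : Fin (k + 1) => w i.castSucc.succ * (rootPoly z).coeff i)
  have hh : hpoly θ w x = (∑ i : Fin k, w i.succ.castSucc.succ * (rootPoly z).coeff i)
      + θ⁻¹ * w (Fin.last (k + 2)) := by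
    unfold hpoly
    rw [dif_pos (by omega)]
    rfl
  have hq : ∑ l : Fin (k + 3), (rootPoly z * X * quadPoly θ z).coeff l * w l =
      (1 - θ * ∑ j, z j) * gpoly w x - θ * (hpoly θ w x - θ⁻¹ * w (Fin.last (k + 2)))
        + w (Fin.last (k + 2)) := by
    have hsplit : ∑ l : Fin (k + 3), (rootPoly z * X * quadPoly θ z).coeff l * w l =
        (rootPoly z * X * quadPoly θ z).coeff 0 * w 0
          + ((rootPoly z * X * quadPoly θ z).coeff 1 * w 1
          + (∑ i : Fin k, (rootPoly z * X * quadPoly θ z).coeff (i + 2) * w i.succ.castSucc.succ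
          + (rootPoly z * X * quadPoly θ z).coeff (k + 2) * w (Fin.last (k + 2)))) := by
      rw [Fin.sum_univ_succ, Fin.sum_univ_succ, Fin.sum_univ_castSucc]
      rfl
    have hmid : ∀ i : Fin k,
        (rootPoly z * X * quadPoly θ z).coeff (i + 2) * w i.succ.castSucc.succ =
          (1 - θ * ∑ j, z j) * (w i.succ.castSucc.succ * (rootPoly z).coeff (i + 1))
            - θ * (w i.succ.castSucc.succ * (rootPoly z).coeff i) := by
      intro i
      rw [coeff_mul_quadPoly]
      ring
    rw [hsplit, Finset.sum_congr rfl fun i _ => hmid i, Finset.sum_sub_distrib, ← Finset.mul_sum,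
      ← Finset.mul_sum, coeff_zero_mul_quadPoly, coeff_one_mul_quadPoly, coeff_mul_quadPoly,
      rootPoly_coeff, rootPoly_coeff_self, hg, hh]
    ring
  have hlast : x ⟨k + 3 - 2, by omega⟩ = x (Fin.last (k + 1)) := rfl
  rw [hq, hf, hlast, hxtr]
  have hσ : ∑ i : Fin (k + 3 - 2), z i = ∑ j, z j := rfl
  rw [hσ]
  change _ = θ * (∏ i : Fin (k + 2), ∏ j ∈ Finset.Ioi i, (x j - x i)) * _
  generalize (∏ i : Fin (k + 2), ∏ j ∈ Finset.Ioi i, (x j - x i)) = V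
  have h2 : ∀ a b : F, a - b = a + b := fun a b => CharTwo.sub_eq_add a b
  have h3 : θ * θ⁻¹ = 1 := mul_inv_cancel₀ hθ
  have h4 : (2 : F) = 0 := CharTwo.two_eq_zero
  simp only [h2]
  linear_combination V * (w (Fin.last (k + 2))
    - fpoly w x * x (Fin.last (k + 1)) - gpoly w x) * h3 + V * w (Fin.last (k + 2)) * h4
end

section
/- Suppose q is even (characteristic 2), θ ∈ 𝔽_q with θ ≠ 0, 2 ≤ k ≤ q − 4, and r = q − k (so r ≥ 4). Let u ∈ 𝔽_q^q be a deep hole of TRS_k(𝔽_q, θ) with syndrome w = (w_0, …, w_{r-1})^T = H·u^T. For variables x_1, …, x_{r-3}, write σ = Σ_{j=1}^{r-3} x_j + θ^{-1}, f̃ = Σ_{i=0}^{r-2} w_i S_i(x_1, …, x_{r-3}, σ), and h̃ = Σ_{i=2}^{r-2} w_i S_{i-2}(x_1, …, x_{r-3}, σ) + θ^{-1} w_{r-1}. Then for every (x_1, …, x_{r-3}) ∈ 𝔽_q^{r-3}: V(x_1, …, x_{r-3}) · ∏_{t=1}^{r-3} (σ + x_t) · ∏_{i=1}^{r-3} (f̃·x_i^2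 + h̃) · f̃ · (f̃·σ^2 + h̃) = 0. -/
/-!
Write `r = q - k`, and call a word of the form `crv F r θ t` a column.

If the product is nonzero at `x`, then `x₁, …, x_{r-3}, σ` are distinct and `f̃ ≠ 0`. Squaring is
bijective in characteristic 2, so `h̃ = f̃ z²` for some `z`, and `f̃ t² + h̃ ≠ 0` for `t = xᵢ, σ` says
that `z` differs from all of them. This gives `r - 1` distinct points. Let `Q = ∏ (X - yⱼ)` over
`y = (x₁, …, x_{r-3}, σ)` and `g = (X² - z²) Q`. In characteristic 2 the polynomial `g` vanishes at
all `r - 1` points, is monic of degree `r`, and its coefficient at `X^{r-1}` is `-Σ yⱼ = -θ⁻¹`. Hence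
`g` encodes a linear relation `t^{r-1} - θ t^r = θ Σ_{i<r-1} gᵢ tⁱ` satisfied by the columns at these
points, and `h̃ = f̃ z²` says exactly that `w` satisfies the same relation. As a Vandermonde system
matches the first `r - 1` coordinates of `w`, the vector `w` is a combination of `r - 1` columns
(`exists_columns`).

Words with zero syndrome are codewords (`mem_TRS_of_syndrome_zero`: interpolate, and read off
coefficients from power sums over the field), so `u` is at distance at most `r - 1` from the code. On
the other hand the word of `X^k` is at distance at least `r` (`le_distTo_pow`: a nonzero polynomial of
degree at most `k` has at most `k` roots), so the covering radius is at least `r` and `u` is not a deep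
hole.
-/

open Polynomial Finset

/-- The set `S_{k,θ}` of twisted polynomials
`Σ_{i=0}^{k-2} f_i x^i + f_{k-1}(x^{k-1} + θ x^k)`. -/
def Sset (F : Type*) [Field F] (k : ℕ) (θ : F) : Set (Polynomial F) :=
  {p | ∃ f : ℕ → F, p = (∑ i ∈ Finset.range (k - 1), Polynomial.C (f i) * Polynomial.X ^ i)
        + Polynomial.C (f (k - 1)) * (Polynomial.X ^ (k - 1) + Polynomial.C θ * Polynomial.X ^ k)}

/-- The twisted Reed–Solomon code `TRS_k(A, θ)` for the evaluation sequence `α`. -/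
def TRS {F : Type*} [Field F] {n : ℕ} (α : Fin n → F) (k : ℕ) (θ : F) : Set (Fin n → F) :=
  {v | ∃ p ∈ Sset F k θ, v = fun j => p.eval (α j)}

/-- The (Hamming) error distance `d(u, C)` from a word `u` to a code `C`. -/
noncomputable def distTo {F : Type*} [DecidableEq F] {n : ℕ} (u : Fin n → F)
    (C : Set (Fin n → F)) : ℕ :=
  sInf {d | ∃ c ∈ C, hammingDist u c = d}

/-- The covering radius `ρ(C) = max_u d(u, C)` of a code `C`. -/
noncomputable def covRad {F : Type*} [DecidableEq F] {n : ℕ} (C : Set (Fin n → F)) : ℕ :=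
  sSup {d | ∃ u, distTo u C = d}

/-- `u` is a deep hole of `C` if `d(u, C) = ρ(C)`. -/
def IsDeepHole {F : Type*} [DecidableEq F] {n : ℕ} (C : Set (Fin n → F)) (u : Fin n → F) :
    Prop :=
  distTo u C = covRad C

/-- The parity-check matrix `H` whose `j`-th column is `c_{r,θ}(α_j)`. -/
def Hmat {F : Type*} [Field F] {n : ℕ} (r : ℕ) (θ : F) (α : Fin n → F) :
    Matrix (Fin r) (Fin n) F :=
  Matrix.of fun i j => crv F r θ (α j) i

/-- `σ = Σ_{j=1}^{r-3} x_j + θ⁻¹`. -/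
def sigmaElt {F : Type*} [Field F] {r : ℕ} (θ : F) (x : Fin (r - 3) → F) : F :=
  (∑ j, x j) + θ⁻¹

/-- The extended tuple `(x_1, …, x_{r-3}, σ)` of length `r - 2`. -/
def ytup {F : Type*} [Field F] {r : ℕ} (θ : F) (x : Fin (r - 3) → F) : Fin (r - 2) → F :=
  fun j => if h : (j : ℕ) < r - 3 then x ⟨j, h⟩ else sigmaElt θ x

/-- `f̃ = Σ_{i=0}^{r-2} w_i S_i(x_1, …, x_{r-3}, σ)`. -/
noncomputable def ftil {F : Type*} [Field F] {r : ℕ} (θ : F) (w : Fin r → F)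
    (x : Fin (r - 3) → F) : F :=
  ∑ i : Fin (r - 1), w (Fin.castLE (by omega) i) * Scoef (ytup θ x) (i : ℕ)

/-- `h̃ = Σ_{i=2}^{r-2} w_i S_{i-2}(x_1, …, x_{r-3}, σ) + θ⁻¹ w_{r-1}`. -/
noncomputable def htil {F : Type*} [Field F] {r : ℕ} (θ : F) (w : Fin r → F)
    (x : Fin (r - 3) → F) : F :=
  (∑ i : Fin (r - 3), w ⟨(i : ℕ) + 2, by have := i.isLt; omega⟩ * Scoef (ytup θ x) (i : ℕ))
    + θ⁻¹ * (if h : r - 1 < r then w ⟨r - 1, h⟩ else 0)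

/-! ### Spanning the syndrome by `r - 1` columns -/

/-- A combination of distinct Vandermonde nodes realises any prescribed moments. -/
lemma exists_moments {F : Type*} [Field F] (T : Finset F) (W : ℕ → F) :
    ∃ a : F → F, ∀ i < T.card, ∑ t ∈ T, a t * t ^ i = W i := by
  classical
  let p : Fin T.card → F := fun i => (T.equivFin.symm i : F)
  have hp : Function.Injective p := fun i j h => T.equivFin.symm.injective (Subtype.ext h)
  have hdet : IsUnit (Matrix.vandermonde p).det :=
    isUnit_iff_ne_zero.mpr (Matrix.det_vandermonde_ne_zero_iff.mpr hp)
  let b := Matrix.vecMul (fun i : Fin T.card => W i) (Matrix.vandermonde p)⁻¹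
  have hb : Matrix.vecMul b (Matrix.vandermonde p) = fun i : Fin T.card => W i := by
    simp [b, Matrix.vecMul_vecMul, Matrix.nonsing_inv_mul _ hdet]
  refine ⟨fun t => if h : t ∈ T then b (T.equivFin ⟨t, h⟩) else 0, fun i hi => ?_⟩
  have h1 := congrFun hb ⟨i, hi⟩
  simp only [Matrix.vecMul, dotProduct, Matrix.vandermonde_apply] at h1
  rw [← h1, ← Finset.sum_coe_sort T, ← T.equivFin.symm.sum_comp]
  refine Finset.sum_congr rfl fun j _ => ?_
  simp [p]

/-- If a relation `g`, monic of degree `s + 3` with next coefficient `-θ⁻¹`, holds at all points of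
`T` and is satisfied by `W`, then `W` is a combination of the columns at `T`. -/
lemma exists_combination {F : Type*} [Field F] (s : ℕ) (θ : F) (hθ : θ ≠ 0) (W : ℕ → F)
    (T : Finset F) (hT : T.card = s + 2) (g : F[X]) (hdeg : g.natDegree = s + 3)
    (hmon : g.Monic) (hnext : g.coeff (s + 2) = -θ⁻¹) (hg : ∀ t ∈ T, g.eval t = 0)
    (hW : ∑ i ∈ Finset.range (s + 2), g.coeff i * W i = θ⁻¹ * W (s + 2)) :
    ∃ a : F → F, (∀ i < s + 2, ∑ t ∈ T, a t * t ^ i = W i) ∧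
      ∑ t ∈ T, a t * (t ^ (s + 2) - θ * t ^ (s + 3)) = W (s + 2) := by
  obtain ⟨a, ha⟩ := exists_moments T W
  rw [hT] at ha
  refine ⟨a, ha, ?_⟩
  have hlead : g.coeff (s + 3) = 1 := by rw [← hdeg]; exact hmon
  have key : ∀ t ∈ T, t ^ (s + 2) - θ * t ^ (s + 3)
      = θ * ∑ i ∈ Finset.range (s + 2), g.coeff i * t ^ i := by
    intro t ht
    have h := hg t ht
    rw [Polynomial.eval_eq_sum_range, hdeg, Finset.sum_range_succ, Finset.sum_range_succ,
      hlead, hnext] at h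
    field_simp at h
    linear_combination -h
  calc ∑ t ∈ T, a t * (t ^ (s + 2) - θ * t ^ (s + 3))
      = ∑ t ∈ T, ∑ i ∈ Finset.range (s + 2), θ * (g.coeff i * (a t * t ^ i)) := by
        refine Finset.sum_congr rfl fun t ht => ?_
        rw [key t ht, Finset.mul_sum, Finset.mul_sum]
        exact Finset.sum_congr rfl fun i _ => by ring
    _ = θ * ∑ i ∈ Finset.range (s + 2), g.coeff i * W i := by
        rw [Finset.sum_comm, Finset.mul_sum]
        refine Finset.sum_congr rfl fun i hi => ?_
        rw [← ha i (Finset.mem_range.mp hi), Finset.mul_sum, Finset.mul_sum]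
    _ = W (s + 2) := by rw [hW, mul_inv_cancel_left₀ hθ]

/-- Where the annihilating product does not vanish, `w` is a combination of `r - 1` columns. -/
lemma exists_columns {F : Type*} [Field F] [Finite F] [CharP F 2] (r : ℕ) (hr : 3 ≤ r)
    (θ : F) (hθ : θ ≠ 0) (w : Fin r → F) (x : Fin (r - 3) → F)
    (hx : (∏ i : Fin (r - 3), ∏ j ∈ Finset.Ioi i, (x j - x i)) ≠ 0)
    (hσ : (∏ t : Fin (r - 3), (sigmaElt (r := r) θ x + x t)) ≠ 0)
    (hfx : (∏ i : Fin (r - 3), (ftil θ w x * x i ^ 2 + htil θ w x)) ≠ 0)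
    (hf : ftil θ w x ≠ 0)
    (hfσ : ftil θ w x * sigmaElt (r := r) θ x ^ 2 + htil θ w x ≠ 0) :
    ∃ (T : Finset F) (a : F → F), T.card < r ∧ ∀ i, ∑ t ∈ T, a t * crv F r θ t i = w i := by
  classical
  obtain ⟨s, rfl⟩ : ∃ s, r = s + 3 := ⟨r - 3, by omega⟩
  change Fin s → F at x
  have hinj : Function.Injective x := by
    rw [← Matrix.det_vandermonde_ne_zero_iff, Matrix.det_vandermonde]
    exact hx
  set σ : F := sigmaElt (r := s + 3) θ x with hσdef
  set f := ftil (r := s + 3) θ w x with hfdef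
  set h := htil (r := s + 3) θ w x with hhdef
  have hσ' : ∀ t : Fin s, σ ≠ x t := by
    intro t e
    refine Finset.prod_ne_zero_iff.mp hσ t (Finset.mem_univ _) ?_
    rw [← e]; exact CharTwo.add_self_eq_zero _
  have hfx' : ∀ t : Fin s, f * x t ^ 2 + h ≠ 0 :=
    fun t => Finset.prod_ne_zero_iff.mp hfx t (Finset.mem_univ _)
  obtain ⟨z, hz⟩ : ∃ z : F, h = f * z ^ 2 := by
    have := Fintype.ofFinite F
    obtain ⟨z, hz⟩ := FiniteField.isSquare_of_char_two (ringChar.eq F 2) (h / f)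
    refine ⟨z, ?_⟩
    rw [pow_two, ← hz]
    field_simp
  let y : Fin (s + 1) → F := ytup (r := s + 3) θ x
  have hyc : ∀ j : Fin s, y j.castSucc = x j := fun j => by
    simp [y, ytup]
  have hyl : y (Fin.last s) = σ := by simp [y, ytup, hσdef]
  have hyinj : Function.Injective y := by
    intro i j
    induction i using Fin.lastCases with
    | last =>
      induction j using Fin.lastCases with
      | last => intro _; rfl
      | cast j => rw [hyc, hyl]; intro e; exact absurd e (hσ' j)
    | cast i =>
      induction j using Fin.lastCases with
      | last => rw [hyc, hyl]; intro e; exact absurd e.symm (hσ' i)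
      | cast j => rw [hyc, hyc]; intro e; rw [hinj e]
  have hzy : ∀ j, y j ≠ z := by
    intro j e
    have h0 : f * z ^ 2 + h = 0 := by rw [← hz]; exact CharTwo.add_self_eq_zero _
    induction j using Fin.lastCases with
    | last => rw [hyl] at e; rw [← e] at h0; exact hfσ h0
    | cast j => rw [hyc] at e; rw [← e] at h0; exact hfx' j h0
  have hysum : ∑ j, y j = θ⁻¹ := by
    rw [Fin.sum_univ_castSucc, hyl]
    simp only [hyc]
    have : σ = (∑ j : Fin s, x j) + θ⁻¹ := rfl
    rw [this, ← add_assoc, CharTwo.add_self_eq_zero, zero_add]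
  set Q : F[X] := ∏ j, (X - C (y j)) with hQ
  have hQmon : Q.Monic := monic_prod_of_monic _ _ fun j _ => monic_X_sub_C _
  have hQdeg : Q.natDegree = s + 1 := by
    rw [hQ, natDegree_prod_of_monic _ _ fun j _ => monic_X_sub_C _]; simp
  have hQnext : Q.coeff s = -θ⁻¹ := by
    have := prod_X_sub_C_coeff_card_pred (Finset.univ : Finset (Fin (s + 1))) y (by simp)
    rw [hysum] at this
    simpa using this
  let W : ℕ → F := fun i => if hi : i < s + 3 then w ⟨i, hi⟩ else 0
  have hfW : f = ∑ i ∈ Finset.range (s + 2), W i * Q.coeff i := by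
    rw [Finset.sum_range]
    refine Finset.sum_congr rfl fun i _ => ?_
    have hi : (i : ℕ) < s + 3 := by have := i.isLt; omega
    simp only [W, hi, dif_pos]
    rfl
  have hhW : h = (∑ i ∈ Finset.range s, W (i + 2) * Q.coeff i) + θ⁻¹ * W (s + 2) := by
    rw [Finset.sum_range]
    have h2 : s + 2 < s + 3 := by omega
    have h1 : h = (∑ i : Fin s, w ⟨(i : ℕ) + 2, by have := i.isLt; omega⟩ * Q.coeff i)
        + θ⁻¹ * W (s + 2) := rfl
    rw [h1]
    congr 1
    refine Finset.sum_congr rfl fun i _ => ?_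
    have hi : (i : ℕ) + 2 < s + 3 := by have := i.isLt; omega
    simp only [W, hi, dif_pos]
  let T : Finset F := insert z (Finset.univ.image y)
  have hzT : z ∉ Finset.univ.image y := by
    simp only [Finset.mem_image, Finset.mem_univ, true_and, not_exists]
    exact hzy
  have hT : T.card = s + 2 := by
    rw [Finset.card_insert_of_notMem hzT, Finset.card_image_of_injective _ hyinj]; simp
  set g : F[X] := (X ^ 2 - C (z ^ 2)) * Q with hgdef
  have hPmon : (X ^ 2 - C (z ^ 2) : F[X]).Monic := monic_X_pow_sub_C _ two_ne_zero
  have hgcoeff : ∀ i, g.coeff (i + 2) = Q.coeff i - z ^ 2 * Q.coeff (i + 2) := fun i => by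
    rw [hgdef, sub_mul, coeff_sub, coeff_X_pow_mul, coeff_C_mul]
  have hglow : ∀ i < 2, g.coeff i = - (z ^ 2 * Q.coeff i) := fun i hi => by
    rw [hgdef, sub_mul, coeff_sub, coeff_X_pow_mul', coeff_C_mul, if_neg (by omega), zero_sub]
  obtain ⟨a, ha, hal⟩ := exists_combination s θ hθ W T hT g
    (by rw [hgdef, hPmon.natDegree_mul hQmon, natDegree_X_pow_sub_C, hQdeg]; omega)
    (hPmon.mul hQmon)
    (by rw [hgcoeff, hQnext, coeff_eq_zero_of_natDegree_lt (by omega), mul_zero, sub_zero])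
    (by
      intro t ht
      rw [hgdef, eval_mul]
      rcases Finset.mem_insert.mp ht with rfl | ht
      · simp
      · obtain ⟨j, -, rfl⟩ := Finset.mem_image.mp ht
        rw [hQ, eval_prod, Finset.prod_eq_zero (Finset.mem_univ j) (by simp), mul_zero])
    (by
      have e1 : ∑ i ∈ Finset.range (s + 2), g.coeff i * W i
          = (∑ i ∈ Finset.range s, W (i + 2) * Q.coeff i)
            - z ^ 2 * ∑ i ∈ Finset.range (s + 2), W i * Q.coeff i := by
        rw [Finset.sum_range_succ', Finset.sum_range_succ', Finset.sum_range_succ' _ (s + 1),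
          Finset.sum_range_succ' _ s, hglow _ (by omega), hglow _ (by omega)]
        have : ∀ i, g.coeff (i + 1 + 1) * W (i + 1 + 1)
            = W (i + 2) * Q.coeff i - z ^ 2 * (W (i + 1 + 1) * Q.coeff (i + 1 + 1)) := fun i => by
          rw [hgcoeff]; ring
        simp only [this, Finset.sum_sub_distrib, ← Finset.mul_sum]
        ring
      rw [e1, ← hfW]
      have h2 : (2 : F) = 0 := CharTwo.two_eq_zero
      linear_combination hz - hhW - θ⁻¹ * W (s + 2) * h2)
  refine ⟨T, a, by omega, fun i => ?_⟩
  have hWi : W i = w i := by simp [W]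
  rw [← hWi]
  by_cases hi : (i : ℕ) = s + 2
  · have : ∀ t, crv F (s + 3) θ t i = t ^ (s + 2) - θ * t ^ (s + 3) := fun t => by
      simp [crv, hi]
    simp only [this, hal, hi]
  · have : ∀ t, crv F (s + 3) θ t i = t ^ (i : ℕ) := fun t => by
      simp [crv, hi]
    simp only [this]
    exact ha i (by have := i.isLt; omega)

/-! ### Words with zero syndrome -/

lemma sum_pow_field {F : Type*} [Field F] [Fintype F] [DecidableEq F] (n : ℕ) :
    ∑ x : F, x ^ n = if n ≠ 0 ∧ Fintype.card F - 1 ∣ n then -1 else 0 := by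
  by_cases hn : n = 0
  · simp [hn]
  · have h := FiniteField.sum_pow_units F n
    have h1 : ∑ x : F, x ^ n = ∑ x : Fˣ, (x ^ n : F) := by
      rw [← Finset.sum_erase (Finset.univ : Finset F) (a := 0) (by simp [hn])]
      symm
      refine Finset.sum_bij (fun x _ => (x : F)) (fun x _ => by simp)
        (fun x _ y _ e => Units.ext e) (fun y hy => ?_) (fun x _ => rfl)
      exact ⟨Units.mk0 y (Finset.ne_of_mem_erase hy), Finset.mem_univ _, rfl⟩
    rw [h1, h]
    simp [hn]

/-- The power moments of a reduced polynomial over the whole field are its coefficients, up to sign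
and reversal. -/
lemma sum_eval_mul_pow {F : Type*} [Field F] [Fintype F] [DecidableEq F] (p : F[X])
    (hp : p.natDegree < Fintype.card F) (i : ℕ) (hi : i < Fintype.card F - 1) :
    ∑ x : F, p.eval x * x ^ i = - p.coeff (Fintype.card F - 1 - i) := by
  have h1 : ∀ x : F, p.eval x * x ^ i
      = ∑ m ∈ Finset.range (Fintype.card F), p.coeff m * x ^ (m + i) := fun x => by
    rw [eval_eq_sum_range' hp, Finset.sum_mul]
    exact Finset.sum_congr rfl fun m _ => by ring
  simp only [h1]
  rw [Finset.sum_comm, Finset.sum_eq_single (Fintype.card F - 1 - i)]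
  · rw [← Finset.mul_sum, sum_pow_field, if_pos]
    · ring
    · rw [Nat.sub_add_cancel hi.le]; exact ⟨by omega, dvd_rfl⟩
  · intro m hm hne
    rw [Finset.mem_range] at hm
    rw [← Finset.mul_sum, sum_pow_field, if_neg, mul_zero]
    -- `0 < m + i < 2 (q - 1)`, so the only multiple of `q - 1` to exclude is `q - 1` itself
    rintro ⟨h0, c, hc⟩
    have hc1 : c ≠ 0 := by rintro rfl; omega
    have hc2 : c < 2 := by
      by_contra hc2
      have := Nat.mul_le_mul_left (Fintype.card F - 1) (not_lt.mp hc2)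
      omega
    obtain rfl : c = 1 := by omega
    omega
  · intro hm
    exact absurd (Finset.mem_range.mpr (by omega)) hm

/-- `H` is a parity-check matrix: words with zero syndrome are codewords. -/
lemma mem_TRS_of_syndrome_zero {F : Type*} [Field F] [Fintype F] [DecidableEq F]
    (q : ℕ) (hq : q = Fintype.card F) (k : ℕ) (hk2 : 2 ≤ k) (hk : k < q) (θ : F)
    (α : Fin q → F) (hα : Function.Bijective α) (v : Fin q → F)
    (hv : (Hmat (q - k) θ α).mulVec v = 0) : v ∈ TRS α k θ := by
  set p : F[X] := Lagrange.interpolate Finset.univ α v with hpdef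
  have hpe : ∀ j, p.eval (α j) = v j := fun j =>
    Lagrange.eval_interpolate_at_node v hα.1.injOn (Finset.mem_univ j)
  have hpd : p.natDegree < Fintype.card F := by
    have hd : p.degree < (Finset.univ : Finset (Fin q)).card :=
      Lagrange.degree_interpolate_lt v hα.1.injOn
    rw [Finset.card_univ, Fintype.card_fin, hq] at hd
    by_cases hp0 : p = 0
    · rw [hp0, natDegree_zero, ← hq]; omega
    · exact (natDegree_lt_iff_degree_lt hp0).mpr hd
  have hsum : ∀ i < q - 1, ∑ j, v j * α j ^ i = - p.coeff (q - 1 - i) := fun i hi => by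
    have h := sum_eval_mul_pow p hpd i (by omega)
    rw [← hq, ← hα.sum_comp (fun x => p.eval x * x ^ i)] at h
    simpa only [hpe] using h
  have hzero : ∀ m, k < m → p.coeff m = 0 := by
    intro m hm
    by_cases hmq : q ≤ m
    · exact coeff_eq_zero_of_natDegree_lt (by omega)
    · have hi : q - 1 - m < q - k := by omega
      have h := congrFun hv ⟨q - 1 - m, hi⟩
      have hne : ¬ (q - 1 - m = q - k - 1) := by omega
      simp only [Matrix.mulVec, dotProduct, Hmat, Matrix.of_apply, crv, hne, if_false,
        Pi.zero_apply] at h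
      have h2 := hsum (q - 1 - m) (by omega)
      rw [show q - 1 - (q - 1 - m) = m by omega] at h2
      rw [← neg_eq_zero, ← h2, ← h]
      exact Finset.sum_congr rfl fun j _ => mul_comm _ _
  have hlast : p.coeff k = θ * p.coeff (k - 1) := by
    have h := congrFun hv ⟨q - k - 1, by omega⟩
    simp only [Matrix.mulVec, dotProduct, Hmat, Matrix.of_apply, crv, if_true,
      Pi.zero_apply] at h
    have h1 := hsum (q - k - 1) (by omega)
    have h2 := hsum (q - k) (by omega)
    rw [show q - 1 - (q - k - 1) = k by omega] at h1
    rw [show q - 1 - (q - k) = k - 1 by omega] at h2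
    have h3 : ∑ j, (α j ^ (q - k - 1) - θ * α j ^ (q - k)) * v j
        = ∑ j, v j * α j ^ (q - k - 1) - θ * ∑ j, v j * α j ^ (q - k) := by
      rw [Finset.mul_sum, ← Finset.sum_sub_distrib]
      exact Finset.sum_congr rfl fun j _ => by ring
    rw [h3, h1, h2] at h
    linear_combination -h
  refine ⟨p, ⟨p.coeff, ?_⟩, funext fun j => (hpe j).symm⟩
  have hpk : p.natDegree < k + 1 :=
    Nat.lt_succ_of_le (natDegree_le_iff_coeff_eq_zero.mpr fun m hm => hzero m hm)
  conv_lhs => rw [p.as_sum_range' (k + 1) hpk]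
  obtain ⟨l, rfl⟩ : ∃ l, k = l + 1 := ⟨k - 1, by omega⟩
  simp only [← C_mul_X_pow_eq_monomial]
  rw [Finset.sum_range_succ, Finset.sum_range_succ, hlast]
  simp only [Nat.add_sub_cancel, C_mul]
  ring

/-! ### Lower bound for the covering radius -/

/-- The word of `X ^ k` is at distance at least `q - k` from the code. -/
lemma le_distTo_pow {F : Type*} [Field F] [DecidableEq F] (q k : ℕ) (hk : 2 ≤ k) (θ : F)
    (α : Fin q → F) (hα : Function.Injective α) :
    q - k ≤ distTo (fun j => α j ^ k) (TRS α k θ) := by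
  have hne : {d | ∃ c ∈ TRS α k θ, hammingDist (fun j => α j ^ k) c = d}.Nonempty :=
    ⟨_, fun j => (0 : F[X]).eval (α j), ⟨0, ⟨fun _ => 0, by simp⟩, rfl⟩, rfl⟩
  refine le_csInf hne ?_
  rintro d ⟨c, ⟨p, ⟨f, hp⟩, rfl⟩, rfl⟩
  set P : F[X] := X ^ k - p with hP
  obtain ⟨l, rfl⟩ : ∃ l, k = l + 1 := ⟨k - 1, by omega⟩
  simp only [Nat.add_sub_cancel] at hp
  have hlow : ∀ m, l ≤ m → (∑ i ∈ Finset.range l, C (f i) * X ^ i : F[X]).coeff m = 0 := by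
    intro m hm
    rw [finsetSum_coeff]
    refine Finset.sum_eq_zero fun i hi => ?_
    rw [Finset.mem_range] at hi
    rw [coeff_C_mul_X_pow, if_neg (by omega)]
  have hP0 : P ≠ 0 := by
    intro h0
    have h1 : P.coeff l = - f l := by
      rw [hP, hp]; simp [hlow l le_rfl, coeff_X_pow]
    have h2 : P.coeff (l + 1) = 1 - f l * θ := by
      rw [hP, hp]; simp [hlow (l + 1) (by omega), coeff_X_pow]
    rw [h0, coeff_zero] at h1 h2
    have h3 : f l = 0 := by linear_combination h1
    rw [h3, zero_mul, sub_zero] at h2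
    exact zero_ne_one h2
  have hPd : P.natDegree ≤ l + 1 := by
    rw [natDegree_le_iff_coeff_eq_zero]
    intro m hm
    rw [hP, hp]
    have e1 : m ≠ l := by omega
    have e2 : m ≠ l + 1 := by omega
    simp [hlow m (by omega), coeff_X_pow, e1, e2]
  let Z : Finset (Fin q) := Finset.univ.filter fun j => P.eval (α j) = 0
  have hZ : Z.card ≤ l + 1 := by
    rw [← Finset.card_image_of_injective Z hα]
    refine (Finset.card_le_card (t := P.roots.toFinset) ?_).trans
      ((Multiset.toFinset_card_le _).trans ((card_roots' P).trans hPd))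
    intro t ht
    obtain ⟨j, hj, rfl⟩ := Finset.mem_image.mp ht
    rw [Multiset.mem_toFinset, mem_roots hP0]
    exact (Finset.mem_filter.mp hj).2
  have hH : hammingDist (fun j => α j ^ (l + 1)) (fun j => p.eval (α j))
      = (Finset.univ.filter fun j => ¬ P.eval (α j) = 0).card := by
    simp [hammingDist, hP, sub_eq_zero]
  have hsplit := Finset.card_filter_add_card_filter_not (s := (Finset.univ : Finset (Fin q)))
    (fun j => P.eval (α j) = 0)
  rw [Finset.card_univ, Fintype.card_fin] at hsplit
  change Z.card + _ = q at hsplit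
  rw [hH]
  omega

lemma distTo_le {F : Type*} [DecidableEq F] {n : ℕ} (u : Fin n → F) {C : Set (Fin n → F)}
    {c : Fin n → F} (hc : c ∈ C) : distTo u C ≤ hammingDist u c :=
  Nat.sInf_le ⟨c, hc, rfl⟩

lemma distTo_le_covRad {F : Type*} [Field F] [DecidableEq F] (q k : ℕ) (θ : F) (α u : Fin q → F) :
    distTo u (TRS α k θ) ≤ covRad (TRS α k θ) := by
  refine le_csSup ⟨q, ?_⟩ ⟨u, rfl⟩
  rintro d ⟨v, rfl⟩
  have h0 : (fun j => (0 : F[X]).eval (α j)) ∈ TRS α k θ := ⟨0, ⟨fun _ => 0, by simp⟩, rfl⟩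
  refine (distTo_le v h0).trans ?_
  simpa using hammingDist_le_card_fintype (x := v) (y := fun j => (0 : F[X]).eval (α j))

/-! ### Deep holes -/

/-- For even `q`, `θ ≠ 0`, `2 ≤ k ≤ q - 4`, `r = q - k`: if `u` is a deep
hole of `TRS_k(𝔽_q, θ)` with syndrome `w = H·uᵀ`, then for all `(x_1, …, x_{r-3}) ∈ 𝔽_q^{r-3}`,
`V(x) · ∏_t (σ + x_t) · ∏_i (f̃ x_i² + h̃) · f̃ · (f̃ σ² + h̃) = 0`. -/
theorem deep_hole_annihilating_polynomial {F : Type*} [Field F] [Fintype F] [DecidableEq F]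
    [CharP F 2] (q : ℕ) (hq : q = Fintype.card F) (k : ℕ) (hk2 : 2 ≤ k) (hk4 : k ≤ q - 4)
    (θ : F) (hθ : θ ≠ 0) (α : Fin q → F) (hα : Function.Bijective α) (u : Fin q → F)
    (hu : IsDeepHole (TRS α k θ) u) (w : Fin (q - k) → F)
    (hw : (Hmat (q - k) θ α).mulVec u = w) :
    ∀ x : Fin (q - k - 3) → F,
      (∏ i : Fin (q - k - 3), ∏ j ∈ Finset.Ioi i, (x j - x i)) *
        (∏ t : Fin (q - k - 3), (sigmaElt (r := q - k) θ x + x t)) *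
        (∏ i : Fin (q - k - 3), (ftil θ w x * x i ^ 2 + htil θ w x)) *
        ftil θ w x *
        (ftil θ w x * sigmaElt (r := q - k) θ x ^ 2 + htil θ w x) = 0 := by
  intro x
  by_contra hne
  obtain ⟨hne, h5⟩ := mul_ne_zero_iff.mp hne
  obtain ⟨hne, h4⟩ := mul_ne_zero_iff.mp hne
  obtain ⟨hne, h3⟩ := mul_ne_zero_iff.mp hne
  obtain ⟨h1, h2⟩ := mul_ne_zero_iff.mp hne
  have hq0 : 0 < q := by rw [hq]; exact Fintype.card_pos
  -- `k ≤ q - 4` is truncated subtraction, but `2 ≤ k` forces `6 ≤ q`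
  obtain ⟨T, a, hT, ha⟩ := exists_columns (q - k) (by omega) θ hθ w x h1 h2 h3 h4 h5
  let e : Fin q → F := fun j => if α j ∈ T then a (α j) else 0
  have he : (Hmat (q - k) θ α).mulVec e = w := by
    funext i
    rw [← ha i]
    simp only [Matrix.mulVec, dotProduct, Hmat, Matrix.of_apply, e]
    rw [hα.sum_comp (fun t => crv F (q - k) θ t i * if t ∈ T then a t else 0)]
    simp [Finset.sum_ite_mem, mul_comm]
  have hmem : u - e ∈ TRS α k θ := by
    refine mem_TRS_of_syndrome_zero q hq k hk2 (by omega) θ α hα _ ?_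
    rw [Matrix.mulVec_sub, hw, he, sub_self]
  have hle : distTo u (TRS α k θ) ≤ T.card := by
    refine (distTo_le u hmem).trans ?_
    refine (Finset.card_le_card_of_injOn α (fun j hj => ?_) hα.1.injOn)
    by_contra hjT
    have : α j ∉ T := hjT
    simp [e, this] at hj
  have hge := le_distTo_pow q k hk2 θ α hα.1
  have hcov := distTo_le_covRad q k θ α (fun j => α j ^ k)
  have hu' : distTo u (TRS α k θ) = covRad (TRS α k θ) := hu
  omega
end

section
/- Let q = 2^m ≥ 8 and suppose k is an integer with 3q − 4 ≤ 4k and k ≤ q − 4. Then u ∈ 𝔽_q^q is a deep hole of TRS_k(𝔽_q, θ) if and only if there exist a ∈ 𝔽_q with a ≠ 0 and g ∈ S_{k,θ} such that u = u_{a x^k + g}. -/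
/-!
Write `r = q - k` and `n = r - 4`, so that `4 * n + 12 ≤ q`, and let `M_u(f) = ∑ⱼ uⱼ f(αⱼ)`.

Covering by syndromes (`distTo_le_of_good`). Suppose `M_u` kills `Q = ∏_{a ∈ D} (X + a) * (X + w)`
with `D` of size `r - 1` and root sum `θ⁻¹`. Interpolate `u` off `D` by a polynomial `p` of degree at
most `k`. As `Q` vanishes on `D`, `0 = M_u(Q) = ∑ₓ p(x) Q(x)`, which is minus the coefficient of
`x ^ (q - 1)` in `p * Q`, namely `p_{k-1} + θ⁻¹ p_k` up to sign. Hence `p ∈ S_{k,θ}`, and `u` is within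
distance `r - 1` of the code.

Finding `Q` (`core`). Such a `Q` exists as soon as `M_u(X ^ i) ≠ 0` for some `i ≤ r - 2`.
Generically (`exists_generic`, `good_of_generic`), choose `n` roots greedily, complete them by a pair
`y, y + δ`, where `δ` is forced by the root sum, and by a double root `b`. In characteristic two a
double root adds nothing to the root sum and enters only through `b ^ 2`, so `M_u(Q) = 0` can be solved
for `b`, squaring being bijective; `b` collides with another root for at most `4 * n + 10 < q` values
of `y`. The exception is when `M_u` kills all degrees up to `n` and its next two values have ratio
`θ⁻¹`. There (`good_of_cubic`) two pairs `y, y + δ` and `v, v + ε` are used instead of a double root: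
the equation becomes `δ (y ^ 2 + δ y) + ε (v ^ 2 + ε v) = κ`, which on the lines
`v = (δ ^ 2 / ε ^ 2) y + μ` is an equation for `y ^ 2` alone, and a good `μ` is found by counting.

Conclusion. A word with a nonzero power sum of exponent at most `r - 2` has distance at most `r - 1`;
altering one coordinate of a word produces such a power sum, so the covering radius is at most `r`
(`distTo_le_all`). Words `a x ^ k + g` with `a ≠ 0` have distance at least `r` by root counting
(`le_distTo`). A deep hole thus has vanishing power sums up to exponent `r - 2`, which forces its
interpolating polynomial to have degree at most `k` (`eq_of_low_zero`).
-/

open Polynomial Finset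

namespace TRSDeepHoles

variable {F : Type*} [Field F]

/-! ### Avoiding the roots of low-degree polynomials -/

theorem roots_bound (p : F[X]) (hp : p ≠ 0) (d : ℕ) (hd : p.natDegree ≤ d) :
    ∃ S : Finset F, S.card ≤ d ∧ ∀ y, y ∉ S → p.eval y ≠ 0 := by
  classical
  refine ⟨p.roots.toFinset, ?_, ?_⟩
  · exact (Multiset.toFinset_card_le _).trans ((Polynomial.card_roots' p).trans hd)
  · intro y hy h0
    exact hy (by simpa [hp] using h0)

theorem lin_bad (a b : F) (h : ¬ (a = 0 ∧ b = 0)) :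
    ∃ S : Finset F, S.card ≤ 1 ∧ ∀ y, y ∉ S → a * y + b ≠ 0 := by
  obtain ⟨S, h1, h2⟩ := roots_bound (C a * X + C b) (by
    intro h0
    apply h
    have e1 := congrArg (fun p => coeff p 1) h0
    have e0 := congrArg (fun p => coeff p 0) h0
    simp [coeff_X, coeff_C] at e1 e0
    exact ⟨e1, e0⟩) 1 (by compute_degree)
  exact ⟨S, h1, fun y hy => by simpa using h2 y hy⟩

theorem quad_bad (a b c : F) (h : ¬ (a = 0 ∧ b = 0 ∧ c = 0)) :
    ∃ S : Finset F, S.card ≤ 2 ∧ ∀ y, y ∉ S → a * y ^ 2 + b * y + c ≠ 0 := by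
  obtain ⟨S, h1, h2⟩ := roots_bound (C a * X ^ 2 + C b * X + C c) (by
    intro h0
    apply h
    have e2 := congrArg (fun p => coeff p 2) h0
    have e1 := congrArg (fun p => coeff p 1) h0
    have e0 := congrArg (fun p => coeff p 0) h0
    simp [coeff_X, coeff_C, coeff_X_pow] at e2 e1 e0
    exact ⟨e2, e1, e0⟩) 2 (by compute_degree)
  exact ⟨S, h1, fun y hy => by simpa using h2 y hy⟩

theorem cubic_bad (a b c d : F) (h : ¬ (a = 0 ∧ b = 0 ∧ c = 0 ∧ d = 0)) :
    ∃ S : Finset F, S.card ≤ 3 ∧ ∀ y, y ∉ S → a * y ^ 3 + b * y ^ 2 + c * y + d ≠ 0 := by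
  obtain ⟨S, h1, h2⟩ := roots_bound (C a * X ^ 3 + C b * X ^ 2 + C c * X + C d) (by
    intro h0
    apply h
    have e3 := congrArg (fun p => coeff p 3) h0
    have e2 := congrArg (fun p => coeff p 2) h0
    have e1 := congrArg (fun p => coeff p 1) h0
    have e0 := congrArg (fun p => coeff p 0) h0
    simp [coeff_X, coeff_C, coeff_X_pow] at e3 e2 e1 e0
    exact ⟨e3, e2, e1, e0⟩) 3 (by compute_degree)
  exact ⟨S, h1, fun y hy => by simpa using h2 y hy⟩

theorem quartic_bad (a b c d e : F) (h : ¬ (a = 0 ∧ b = 0 ∧ c = 0 ∧ d = 0 ∧ e = 0)) :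
    ∃ S : Finset F, S.card ≤ 4 ∧
      ∀ y, y ∉ S → a * y ^ 4 + b * y ^ 3 + c * y ^ 2 + d * y + e ≠ 0 := by
  obtain ⟨S, h1, h2⟩ := roots_bound
    (C a * X ^ 4 + C b * X ^ 3 + C c * X ^ 2 + C d * X + C e) (by
    intro h0
    apply h
    have e4 := congrArg (fun p => coeff p 4) h0
    have e3 := congrArg (fun p => coeff p 3) h0
    have e2 := congrArg (fun p => coeff p 2) h0
    have e1 := congrArg (fun p => coeff p 1) h0
    have e0 := congrArg (fun p => coeff p 0) h0
    simp [coeff_X, coeff_C, coeff_X_pow] at e4 e3 e2 e1 e0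
    exact ⟨e4, e3, e2, e1, e0⟩) 4 (by compute_degree)
  exact ⟨S, h1, fun y hy => by simpa using h2 y hy⟩

/-- Uniting the exceptional sets of the members of a finite family. -/
theorem family_bad {G : Type*} (B : Finset G) (d : ℕ) (P : G → G → Prop)
    (h : ∀ e ∈ B, ∃ S : Finset G, S.card ≤ d ∧ ∀ y, y ∉ S → P e y) :
    ∃ S : Finset G, S.card ≤ B.card * d ∧ ∀ y, y ∉ S → ∀ e ∈ B, P e y := by
  classical
  choose! S h1 h2 using h
  refine ⟨B.biUnion S, Finset.card_biUnion_le_card_mul _ _ _ h1, ?_⟩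
  intro y hy e he
  exact h2 e he y (fun h => hy (Finset.mem_biUnion.2 ⟨e, he, h⟩))

theorem exists_notMem_of_card_lt {G : Type*} [Fintype G] (S : Finset G)
    (h : S.card < Fintype.card G) :
    ∃ y, y ∉ S := by
  by_contra! hc
  have : S = Finset.univ := Finset.eq_univ_iff_forall.2 hc
  rw [this, Finset.card_univ] at h
  exact lt_irrefl _ h

/-! ### Generic choice of roots -/

/-- The monic polynomial `∏_{b ∈ B} (X + b)`; in characteristic two its roots are the elements
of `B`. -/
noncomputable def rootPoly (B : Finset F) : F[X] := ∏ b ∈ B, (X + C b)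

theorem rootPoly_insert [DecidableEq F] {B : Finset F} {g : F} (h : g ∉ B) :
    rootPoly (insert g B) = (X + C g) * rootPoly B := Finset.prod_insert h

theorem map_C_mul (M : F[X] →ₗ[F] F) (a : F) (p : F[X]) : M (C a * p) = a * M p := by
  rw [← smul_eq_C_mul, map_smul, smul_eq_mul]

/-- Multiplying by `X + g` keeps the functional nonzero on one of the monomials, one fewer of them
being considered, for all but one value of `g`. -/
theorem shift_one (M : F[X] →ₗ[F] F) (P : F[X]) (N : ℕ)
    (h : ∃ i ≤ N + 1, M (P * X ^ i) ≠ 0) :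
    ∃ S : Finset F, S.card ≤ 1 ∧ ∀ g, g ∉ S → ∃ i ≤ N, M (P * (X + C g) * X ^ i) ≠ 0 := by
  obtain ⟨j, hj, hne⟩ : ∃ j ≤ N, ¬ (M (P * X ^ j) = 0 ∧ M (P * X ^ (j + 1)) = 0) := by
    obtain ⟨i, hi, hne⟩ := h
    rcases Nat.lt_or_ge i (N + 1) with h1 | h1
    · exact ⟨i, by omega, fun h => hne h.1⟩
    · exact ⟨N, le_rfl, fun h => hne (by rw [show i = N + 1 by omega]; exact h.2)⟩
  obtain ⟨S, h1, h2⟩ := lin_bad _ _ hne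
  refine ⟨S, h1, fun g hg => ⟨j, hj, ?_⟩⟩
  have : P * (X + C g) * X ^ j = C g * (P * X ^ j) + P * X ^ (j + 1) := by ring
  rw [this, map_add, map_C_mul, mul_comm]
  simpa [mul_comm] using h2 g hg

/-- The analogue of `shift_one` for `(X + g) ^ 3 = (X + g) (X + g) ^ 2`. It guarantees that a newly
chosen root may also be used as the double root. -/
theorem shift_three [CharP F 2] (M : F[X] →ₗ[F] F) (P : F[X]) (N : ℕ)
    (h : ∃ i ≤ N + 1, M (P * X ^ i) ≠ 0) :
    ∃ S : Finset F, S.card ≤ 3 ∧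
      ∀ g, g ∉ S → ∃ i ≤ N, M (P * (X + C g) * (X + C g) ^ 2 * X ^ i) ≠ 0 := by
  obtain ⟨j, hj, hne⟩ : ∃ j ≤ N, ¬ (M (P * X ^ j) = 0 ∧ M (P * X ^ (j + 1)) = 0) := by
    obtain ⟨i, hi, hne⟩ := h
    rcases Nat.lt_or_ge i (N + 1) with h1 | h1
    · exact ⟨i, by omega, fun h => hne h.1⟩
    · exact ⟨N, le_rfl, fun h => hne (by rw [show i = N + 1 by omega]; exact h.2)⟩
  obtain ⟨S, h1, h2⟩ := cubic_bad (M (P * X ^ j)) (M (P * X ^ (j + 1)))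
    (M (P * X ^ (j + 2))) (M (P * X ^ (j + 3))) (fun h => hne ⟨h.1, h.2.1⟩)
  refine ⟨S, h1, fun g hg => ⟨j, hj, ?_⟩⟩
  have : P * (X + C g) * (X + C g) ^ 2 * X ^ j
      = C (g ^ 3) * (P * X ^ j) + C (g ^ 2) * (P * X ^ (j + 1)) + C g * (P * X ^ (j + 2))
        + P * X ^ (j + 3) := by
    rw [show (X + C g) ^ 2 = X ^ 2 + C g ^ 2 from CharTwo.add_sq _ _]
    simp only [C_pow]
    ring
  rw [this]
  simp only [map_add, map_C_mul]
  have := h2 g hg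
  intro h0
  exact this (by linear_combination h0)

/-- Greedy choice of the first `n` roots: the inequalities are open conditions that each new
root violates only for a bounded number of values. -/
theorem exists_generic [CharP F 2] [Fintype F] (M : F[X] →ₗ[F] F) (c : F) (hc : c ≠ 0) (n : ℕ)
    (hn : 2 * n + 5 ≤ Fintype.card F) (h : ∃ i ≤ n, M (X ^ i) ≠ 0) :
    ∀ j N, j + N = n → ∃ B : Finset F, B.card = j ∧ ∑ b ∈ B, b ≠ c ∧
      (∃ i ≤ N, M (rootPoly B * X ^ i) ≠ 0) ∧
      ∀ e ∈ B, ∃ i ≤ N, M (rootPoly B * (X + C e) ^ 2 * X ^ i) ≠ 0 := by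
  classical
  intro j
  induction j with
  | zero =>
    intro N hN
    refine ⟨∅, rfl, by simpa using hc.symm, ?_, by simp⟩
    simpa [rootPoly, show N = n by omega] using h
  | succ j ih =>
    intro N hN
    obtain ⟨B, hB, hs, h0, he⟩ := ih (N + 1) (by omega)
    obtain ⟨S1, c1, p1⟩ := shift_one M _ N h0
    obtain ⟨S3, c3, p3⟩ := shift_three M _ N h0
    obtain ⟨S2, c2, p2⟩ := family_bad B 1
      (fun e g => ∃ i ≤ N, M (rootPoly B * (X + C e) ^ 2 * (X + C g) * X ^ i) ≠ 0)
      (fun e h => shift_one M _ N (he e h))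
    obtain ⟨g, hg⟩ := exists_notMem_of_card_lt (B ∪ S1 ∪ S2 ∪ S3 ∪ {c - ∑ b ∈ B, b}) (by
      have e1 := Finset.card_union_le (B ∪ S1 ∪ S2 ∪ S3) {c - ∑ b ∈ B, b}
      have e2 := Finset.card_union_le (B ∪ S1 ∪ S2) S3
      have e3 := Finset.card_union_le (B ∪ S1) S2
      have e4 := Finset.card_union_le B S1
      rw [Finset.card_singleton] at e1
      omega)
    simp only [Finset.mem_union, not_or, Finset.mem_singleton] at hg
    obtain ⟨⟨⟨⟨g0, g1⟩, g2⟩, g3⟩, g4⟩ := hg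
    refine ⟨insert g B, by rw [Finset.card_insert_of_notMem g0, hB], ?_, ?_, ?_⟩
    · rw [Finset.sum_insert g0]
      intro h
      exact g4 (by linear_combination h)
    · rw [rootPoly_insert g0, mul_comm (X + C g)]
      exact p1 g g1
    · intro e hme
      rw [rootPoly_insert g0, mul_comm (X + C g)]
      rcases Finset.mem_insert.1 hme with rfl | hme
      · exact p3 _ g3
      · obtain ⟨i, hi, hh⟩ := p2 g g2 e hme
        exact ⟨i, hi, by rwa [mul_right_comm (rootPoly B)]⟩

theorem exists_sq [CharP F 2] [Fintype F] (a : F) : ∃ b : F, b ^ 2 = a := by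
  obtain ⟨b, hb⟩ := (PerfectRing.bijective_frobenius (R := F) (p := 2)).2 a
  exact ⟨b, by simpa [frobenius_def] using hb⟩

/-! ### Completing by a pair and a double root -/

/-- `M` vanishes on a monic polynomial with root sum `c`, the first `n + 3` of whose `n + 4` roots
are distinct. The elements of `D` are these roots, and the remaining root `w` may be repeated. -/
def HasGoodRoots (M : F[X] →ₗ[F] F) (c : F) (n : ℕ) : Prop :=
  ∃ (D : Finset F) (w : F), D.card = n + 3 ∧ ∑ b ∈ D, b + w = c ∧
    M (rootPoly D * (X + C w)) = 0

/-- Complete `B` by a pair `y, y + δ` and a double root `b`. The double root contributes nothing to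
the root sum and enters through `b ^ 2`, so it can be solved for; only finitely many `y` make it
collide with an earlier root. -/
theorem good_of_generic [CharP F 2] [Fintype F] (M : F[X] →ₗ[F] F) (c : F) (n : ℕ)
    (hn : 4 * n + 12 ≤ Fintype.card F) (B : Finset F) (hB : B.card = n) (δ : F) (hδ : δ ≠ 0)
    (hs : ∑ b ∈ B, b + δ = c) (m0 m1 m2 m3 : F)
    (hm0 : M (rootPoly B) = m0)
    (hm1 : M (rootPoly B * (X ^ 2 + C δ * X)) = m1)
    (hm2 : M (rootPoly B * X ^ 2) = m2)
    (hm3 : M (rootPoly B * (X ^ 2 + C δ * X) * X ^ 2) = m3)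
    (h1 : ¬ (m0 = 0 ∧ m1 = 0))
    (h2 : ∀ e ∈ B, ¬ (m2 + e ^ 2 * m0 = 0 ∧ m3 + e ^ 2 * m1 = 0)) :
    HasGoodRoots M c n := by
  classical
  have h20 : (2 : F) = 0 := CharTwo.two_eq_zero
  have hA : ∀ y, (X + C (y + δ)) * ((X + C y) * rootPoly B)
      = rootPoly B * (X ^ 2 + C δ * X) + C (y ^ 2 + δ * y) * rootPoly B := by
    intro y
    have : (2 : F[X]) = 0 := CharTwo.two_eq_zero
    simp only [C_add, C_mul, C_pow]
    linear_combination (X * C y * rootPoly B) * this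
  have hMA : ∀ y, M ((X + C (y + δ)) * ((X + C y) * rootPoly B)) = m1 + (y ^ 2 + δ * y) * m0 := by
    intro y
    rw [hA, map_add, map_C_mul, hm0, hm1]
  have hMA2 : ∀ y, M ((X + C (y + δ)) * ((X + C y) * rootPoly B) * X ^ 2)
      = m3 + (y ^ 2 + δ * y) * m2 := by
    intro y
    rw [hA, add_mul, map_add, mul_assoc (C _), map_C_mul, hm2, hm3]
  -- `S1`: `b ^ 2` is undetermined; `S2`: `b` lands in `B`; `S3`: `b = y`, and `b = y + δ` for the
  -- translate of `S3`
  obtain ⟨S1, c1, p1⟩ := quad_bad m0 (δ * m0) m1 (fun h => h1 ⟨h.1, h.2.2⟩)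
  obtain ⟨S2, c2, p2⟩ := family_bad B 2
    (fun e y => (m2 + e ^ 2 * m0) * y ^ 2 + (δ * (m2 + e ^ 2 * m0)) * y + (m3 + e ^ 2 * m1) ≠ 0)
    (fun e he => quad_bad _ _ _ (fun h => h2 e he ⟨h.1, h.2.2⟩))
  obtain ⟨S3, c3, p3⟩ := quartic_bad m0 (δ * m0) (m1 + m2) (δ * m2) m3 (fun h => by
    obtain ⟨a, -, b, d, -⟩ := h
    have hm2' : m2 = 0 := (mul_eq_zero.1 d).resolve_left hδ
    exact h1 ⟨a, by simpa [hm2'] using b⟩)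
  obtain ⟨y, hy⟩ := exists_notMem_of_card_lt
    (B ∪ B.image (· + δ) ∪ S1 ∪ S2 ∪ S3 ∪ S3.image (· + δ)) (by
      have e1 := Finset.card_union_le (B ∪ B.image (· + δ) ∪ S1 ∪ S2 ∪ S3) (S3.image (· + δ))
      have e2 := Finset.card_union_le (B ∪ B.image (· + δ) ∪ S1 ∪ S2) S3
      have e3 := Finset.card_union_le (B ∪ B.image (· + δ) ∪ S1) S2
      have e4 := Finset.card_union_le (B ∪ B.image (· + δ)) S1
      have e5 := Finset.card_union_le B (B.image (· + δ))
      have e6 := Finset.card_image_le (s := B) (f := (· + δ))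
      have e7 := Finset.card_image_le (s := S3) (f := (· + δ))
      omega)
  simp only [Finset.mem_union, not_or] at hy
  obtain ⟨⟨⟨⟨⟨y0, y1⟩, y2⟩, y3⟩, y4⟩, y5⟩ := hy
  have y1' : y + δ ∉ B := fun h => y1 (Finset.mem_image.2 ⟨_, h, by
    linear_combination δ * h20⟩)
  have y5' : y + δ ∉ S3 := fun h => y5 (Finset.mem_image.2 ⟨_, h, by
    linear_combination δ * h20⟩)
  have hne : m1 + (y ^ 2 + δ * y) * m0 ≠ 0 := fun h => p1 y y2 (by linear_combination h)
  obtain ⟨b, hb⟩ := exists_sq ((m3 + (y ^ 2 + δ * y) * m2) / (m1 + (y ^ 2 + δ * y) * m0))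
  have hb' : (m3 + (y ^ 2 + δ * y) * m2) + b ^ 2 * (m1 + (y ^ 2 + δ * y) * m0) = 0 := by
    rw [hb, div_mul_cancel₀ _ hne]
    exact CharTwo.add_self_eq_zero _
  have k1 : y ∉ B := y0
  have k2 : y + δ ∉ insert y B := by
    rw [Finset.mem_insert, not_or]
    exact ⟨fun h => hδ (by linear_combination h), y1'⟩
  have k3 : b ∉ insert (y + δ) (insert y B) := by
    simp only [Finset.mem_insert, not_or]
    refine ⟨?_, ?_, ?_⟩
    · rintro rfl
      exact p3 _ y5' (by
        linear_combination hb' + m0 * (δ * y * (y + δ) ^ 2 + δ ^ 2 * (y + δ) ^ 2) * h20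
          + (δ * y + δ ^ 2) * m2 * h20)
    · rintro rfl
      exact p3 _ y4 (by linear_combination hb')
    · intro hbB
      exact p2 _ y3 b hbB (by linear_combination hb')
  refine ⟨insert b (insert (y + δ) (insert y B)), b, ?_, ?_, ?_⟩
  · rw [Finset.card_insert_of_notMem k3, Finset.card_insert_of_notMem k2,
      Finset.card_insert_of_notMem k1, hB]
  · rw [Finset.sum_insert k3, Finset.sum_insert k2, Finset.sum_insert k1]
    linear_combination hs + (b + y) * h20
  · rw [rootPoly_insert k3, rootPoly_insert k2, rootPoly_insert k1]
    have : (X + C b) * ((X + C (y + δ)) * ((X + C y) * rootPoly B)) * (X + C b)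
        = (X + C (y + δ)) * ((X + C y) * rootPoly B) * X ^ 2
          + C (b ^ 2) * ((X + C (y + δ)) * ((X + C y) * rootPoly B)) := by
      have h : (X + C b) ^ 2 = X ^ 2 + C b ^ 2 := CharTwo.add_sq _ _
      rw [C_pow]
      linear_combination ((X + C (y + δ)) * ((X + C y) * rootPoly B)) * h
    rw [this, map_add, map_C_mul, hMA, hMA2, hb']

/-! ### Functionals vanishing in low degree -/

theorem map_eq_zero_of_low (M : F[X] →ₗ[F] F) (n : ℕ) (h : ∀ i ≤ n, M (X ^ i) = 0)
    (p : F[X]) (hp : p.natDegree ≤ n) : M p = 0 := by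
  rw [p.as_sum_range_C_mul_X_pow' (n := n + 1) (by omega), map_sum]
  refine Finset.sum_eq_zero fun i hi => ?_
  rw [map_C_mul, h i (by simpa [Nat.lt_succ_iff] using hi), mul_zero]

theorem rootPoly_natDegree (B : Finset F) : (rootPoly B).natDegree = B.card := by
  rw [rootPoly, natDegree_prod_of_monic _ _ (fun b _ => monic_X_add_C b)]
  simp

/-- The two top terms of `∏_{b ∈ B} (X + b)`, multiplied by `X` so that the empty product needs no
separate treatment; the last conjunct says that the remainder has degree below `B.card`. -/
theorem X_mul_rootPoly (B : Finset F) :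
    ∃ R : F[X], R.natDegree ≤ B.card ∧
      X * rootPoly B = X ^ (B.card + 1) + C (∑ b ∈ B, b) * X ^ B.card + R ∧
      (X * R).natDegree ≤ B.card := by
  classical
  induction B using Finset.induction_on with
  | empty => exact ⟨0, by simp, by simp [rootPoly], by simp⟩
  | insert g B hg ih =>
    obtain ⟨R, h1, h3, h4⟩ := ih
    refine ⟨X * R + C g * R + C (g * ∑ b ∈ B, b) * X ^ B.card, ?_, ?_, ?_⟩
    · rw [Finset.card_insert_of_notMem hg]
      have : (C g * R).natDegree ≤ B.card := (natDegree_C_mul_le _ _).trans h1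
      refine (natDegree_add_le_of_degree_le (natDegree_add_le_of_degree_le h4 this)
        (natDegree_C_mul_X_pow_le _ _)).trans (by omega)
    · rw [rootPoly_insert hg, Finset.sum_insert hg, Finset.card_insert_of_notMem hg,
        show X * ((X + C g) * rootPoly B) = (X + C g) * (X * rootPoly B) by ring, h3]
      simp only [C_add, C_mul]
      ring
    · rw [Finset.card_insert_of_notMem hg]
      refine natDegree_mul_le.trans ?_
      have : (C g * R).natDegree ≤ B.card := (natDegree_C_mul_le _ _).trans h1
      have := natDegree_add_le_of_degree_le (natDegree_add_le_of_degree_le h4 this)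
        (natDegree_C_mul_X_pow_le (g * ∑ b ∈ B, b) B.card)
      rw [natDegree_X]
      omega

/-- If `M` kills all polynomials of degree at most `n`, then on `P`, `X * P` and `X ^ 2 * P`, for
`P` monic of degree `n`, it only sees the two leading coefficients of `P`. -/
theorem low_values (M : F[X] →ₗ[F] F) (n : ℕ) (h : ∀ i ≤ n, M (X ^ i) = 0)
    (B : Finset F) (hB : B.card = n) :
    M (rootPoly B) = 0 ∧ M (rootPoly B * X) = M (X ^ (n + 1)) ∧
      M (rootPoly B * X ^ 2) = M (X ^ (n + 2)) + (∑ b ∈ B, b) * M (X ^ (n + 1)) := by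
  obtain ⟨R, h1, h3, h4⟩ := X_mul_rootPoly B
  rw [hB] at h1 h3 h4
  refine ⟨map_eq_zero_of_low M n h _ (by rw [rootPoly_natDegree, hB]), ?_, ?_⟩
  · rw [mul_comm, h3, map_add, map_add, map_C_mul, h n le_rfl, map_eq_zero_of_low M n h R h1]
    ring
  · rw [show rootPoly B * X ^ 2 = X * (X * rootPoly B) by ring, h3,
      show X * (X ^ (n + 1) + C (∑ b ∈ B, b) * X ^ n + R)
        = X ^ (n + 2) + C (∑ b ∈ B, b) * X ^ (n + 1) + X * R by ring,
      map_add, map_add, map_C_mul, map_eq_zero_of_low M n h _ h4]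
    ring

theorem exists_card_sum_avoid [Fintype F] (n : ℕ) (hn : 0 < n) (S : Finset F)
    (h : n + S.card ≤ Fintype.card F) : ∃ B : Finset F, B.card = n ∧ ∑ b ∈ B, b ∉ S := by
  classical
  obtain ⟨B, -, hB⟩ := Finset.exists_subset_card_eq (s := (Finset.univ : Finset F)) (n := n - 1)
    (by rw [Finset.card_univ]; omega)
  obtain ⟨g, hg⟩ := exists_notMem_of_card_lt (B ∪ S.image (· - ∑ b ∈ B, b)) (by
    have e1 := Finset.card_union_le B (S.image (· - ∑ b ∈ B, b))
    have e2 := Finset.card_image_le (s := S) (f := (· - ∑ b ∈ B, b))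
    omega)
  rw [Finset.mem_union, not_or] at hg
  refine ⟨insert g B, by rw [Finset.card_insert_of_notMem hg.1]; omega, ?_⟩
  rw [Finset.sum_insert hg.1]
  exact fun h => hg.2 (Finset.mem_image.2 ⟨_, h, by ring⟩)

/-- A union of `j` cosets of `{0, δ}`, whose elements sum to `j δ`. -/
theorem exists_closed_set [CharP F 2] [Fintype F] (δ : F) (hδ : δ ≠ 0) (j : ℕ)
    (hj : 2 * j ≤ Fintype.card F) :
    ∃ B : Finset F, B.card = 2 * j ∧ (∀ x ∈ B, x + δ ∈ B) ∧
      (∑ b ∈ B, b = 0 ∨ ∑ b ∈ B, b = δ) := by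
  classical
  have h20 : (2 : F) = 0 := CharTwo.two_eq_zero
  induction j with
  | zero => exact ⟨∅, by simp⟩
  | succ j ih =>
    obtain ⟨B, hB, hc, hs⟩ := ih (by omega)
    obtain ⟨g, hg⟩ := exists_notMem_of_card_lt B (by omega)
    have k : g + δ ∉ insert g B := by
      rw [Finset.mem_insert, not_or]
      refine ⟨fun h => hδ (by linear_combination h), fun h => hg ?_⟩
      have := hc _ h
      rwa [show g + δ + δ = g by linear_combination δ * h20] at this
    refine ⟨insert (g + δ) (insert g B), ?_, ?_, ?_⟩
    · rw [Finset.card_insert_of_notMem k, Finset.card_insert_of_notMem hg]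
      omega
    · intro x hx
      simp only [Finset.mem_insert] at hx ⊢
      rcases hx with rfl | rfl | hx
      · exact Or.inr (Or.inl (by linear_combination δ * h20))
      · exact Or.inl rfl
      · exact Or.inr (Or.inr (hc x hx))
    · rw [Finset.sum_insert k, Finset.sum_insert hg]
      rcases hs with hs | hs
      · exact Or.inr (by rw [hs]; linear_combination g * h20)
      · exact Or.inl (by rw [hs]; linear_combination (g + δ) * h20)

/-- Parameters for the cubic case. Taking `B` inside a set `T` only slightly larger than `B` and
stable under `x ↦ x + δ` lets the two conditions `y ∉ B`, `y + δ ∉ B` be replaced by `y ∉ T`. -/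
theorem exists_cubic_data [CharP F 2] [Fintype F] (c : F) (hc : c ≠ 0) (n : ℕ)
    (hn : n + 12 ≤ Fintype.card F) :
    ∃ (δ ε : F) (B T : Finset F), δ ≠ 0 ∧ ε ≠ 0 ∧ ε ^ 3 + δ ^ 3 ≠ 0 ∧ B ⊆ T ∧
      (∀ x ∈ T, x + δ ∈ T) ∧ B.card = n ∧ T.card ≤ n + 1 ∧ ∑ b ∈ B, b + δ + ε = c := by
  classical
  have h20 : (2 : F) = 0 := CharTwo.two_eq_zero
  -- avoiding the roots of `δ (δ ^ 3 + c ^ 3)` leaves room for both `ε = c` and `ε = c + δ`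
  obtain ⟨S, cS, pS⟩ := quartic_bad 1 0 0 (c ^ 3) 0 (fun h => one_ne_zero h.1)
  obtain ⟨δ, hδS⟩ := exists_notMem_of_card_lt S (by omega)
  have hprod := pS δ hδS
  have hδ : δ ≠ 0 := by
    rintro rfl
    exact hprod (by ring)
  have hcube : c ^ 3 + δ ^ 3 ≠ 0 := fun h => hprod (by linear_combination δ * h)
  have hfac : (c + δ) * (c ^ 2 + c * δ + δ ^ 2) ≠ 0 := fun h => hcube (by
    linear_combination h - (c ^ 2 * δ + c * δ ^ 2) * h20)
  rcases Nat.even_or_odd' n with ⟨j, rfl | rfl⟩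
  · obtain ⟨B, hB, hcl, hs⟩ := exists_closed_set δ hδ j (by omega)
    rcases hs with hs | hs
    · refine ⟨δ, c + δ, B, B, hδ, left_ne_zero_of_mul hfac, ?_, subset_rfl, hcl, hB, by omega, ?_⟩
      · intro h
        refine mul_ne_zero hc (right_ne_zero_of_mul hfac) ?_
        linear_combination h - (δ ^ 3 + c ^ 2 * δ + c * δ ^ 2) * h20
      · rw [hs]
        linear_combination δ * h20
    · refine ⟨δ, c, B, B, hδ, hc, hcube, subset_rfl, hcl, hB, by omega, ?_⟩
      rw [hs]
      linear_combination δ * h20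
  · obtain ⟨B, hB, hcl, hs⟩ := exists_closed_set δ hδ j (by omega)
    -- one further root `g` is needed, and `ε` moves with `g` so that the root sum stays `c`
    obtain ⟨S', cS', pS'⟩ := quartic_bad 1 0 0 (δ ^ 3) 0 (fun h => one_ne_zero h.1)
    obtain ⟨g, hg⟩ := exists_notMem_of_card_lt (B ∪ S'.image (· + (c + δ + ∑ b ∈ B, b))) (by
      have e1 := Finset.card_union_le B (S'.image (· + (c + δ + ∑ b ∈ B, b)))
      have e2 := Finset.card_image_le (s := S') (f := (· + (c + δ + ∑ b ∈ B, b)))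
      omega)
    rw [Finset.mem_union, not_or] at hg
    have hg' : g + (c + δ + ∑ b ∈ B, b) ∉ S' := fun h => hg.2 (Finset.mem_image.2 ⟨_, h, by
      linear_combination (c + δ + ∑ b ∈ B, b) * h20⟩)
    have hq := pS' _ hg'
    set ε := g + (c + δ + ∑ b ∈ B, b) with hε
    refine ⟨δ, ε, insert g B, insert (g + δ) (insert g B), hδ, ?_, ?_,
      Finset.subset_insert _ _, ?_, ?_, ?_, ?_⟩
    · intro h
      rw [h] at hq
      exact hq (by ring)
    · exact fun h => hq (by linear_combination ε * h)
    · intro x hx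
      simp only [Finset.mem_insert] at hx ⊢
      rcases hx with rfl | rfl | hx
      · exact Or.inr (Or.inl (by linear_combination δ * h20))
      · exact Or.inl rfl
      · exact Or.inr (Or.inr (hcl x hx))
    · rw [Finset.card_insert_of_notMem hg.1, hB]
    · refine (Finset.card_insert_le _ _).trans ?_
      rw [Finset.card_insert_of_notMem hg.1, hB]
    · rw [Finset.sum_insert hg.1, hε]
      linear_combination (g + δ + ∑ b ∈ B, b) * h20

/-- The exceptional functionals, for which a double root `b` drops out of the equation instead of being
determined by it. With the roots outside `B`
grouped into pairs `y, y + δ` and `v, v + ε`, the equation becomes additive in `(y, v)`; putting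
`v = (δ² / ε²) y + μ` removes its linear term in `y`, so each `μ` yields a solution. -/
theorem good_of_cubic [CharP F 2] [Fintype F] (M : F[X] →ₗ[F] F) (c : F) (hc : c ≠ 0) (n : ℕ)
    (hn : 4 * n + 12 ≤ Fintype.card F) (h : ∀ i ≤ n, M (X ^ i) = 0) (hσ : M (X ^ (n + 1)) ≠ 0)
    (hτ : M (X ^ (n + 2)) + c * M (X ^ (n + 1)) = 0) : HasGoodRoots M c n := by
  classical
  have h20 : (2 : F) = 0 := CharTwo.two_eq_zero
  obtain ⟨δ, ε, B, T, hδ, hε, hcube, hBT, hT, hB, hTc, hs⟩ :=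
    exists_cubic_data c hc n (by omega)
  obtain ⟨l0, l1, l2⟩ := low_values M n h B hB
  set σ := M (X ^ (n + 1)) with hσdef
  obtain ⟨lam, hlam⟩ : ∃ lam : F, lam * ε ^ 2 = δ ^ 2 := ⟨δ ^ 2 / ε ^ 2, by field_simp⟩
  have hlam0 : lam ≠ 0 := by
    rintro rfl
    rw [zero_mul] at hlam
    exact pow_ne_zero 2 hδ hlam.symm
  set hh := δ + ε * lam ^ 2 with hhdef
  have hh0 : hh ≠ 0 := by
    intro h0
    refine mul_ne_zero hδ hcube ?_
    have : hh * ε ^ 3 = δ * (ε ^ 3 + δ ^ 3) := by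
      rw [hhdef]
      linear_combination (lam * ε ^ 2 + δ ^ 2) * hlam
    rw [← this, h0, zero_mul]
  obtain ⟨κ, hκ⟩ : ∃ κ : F, κ * σ = M (rootPoly B * (X ^ 4 + C (δ + ε) * X ^ 3))
      + (δ + ε) * δ * ε * σ := ⟨_, div_mul_cancel₀ _ hσ⟩
  -- `S1`: `y` lands in `T`; `S2`: `v` lands in `B`; `S3`: `v = y`; `S4`: `v = y + δ`
  obtain ⟨S1, c1, p1⟩ := family_bad T 2
    (fun g μ => ε * μ ^ 2 + ε ^ 2 * μ + (κ + hh * g ^ 2) ≠ 0)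
    (fun g _ => quad_bad _ _ _ (fun h => hε h.1))
  obtain ⟨S2, c2, p2⟩ := family_bad B 2
    (fun g μ => (lam ^ 2 * ε + hh) * μ ^ 2 + (lam ^ 2 * ε ^ 2) * μ + (lam ^ 2 * κ + hh * g ^ 2) ≠ 0)
    (fun g _ => quad_bad _ _ _
      (fun h => mul_ne_zero (pow_ne_zero 2 hlam0) (pow_ne_zero 2 hε) h.2.1))
  have hdiff : ∀ x : F, ¬ ((lam + 1) ^ 2 * ε + hh = 0 ∧ (lam + 1) ^ 2 * ε ^ 2 = 0 ∧ x = 0) := by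
    rintro x ⟨h1, h2, -⟩
    have := (mul_eq_zero.1 h2).resolve_right (pow_ne_zero 2 hε)
    rw [this, zero_mul, zero_add] at h1
    exact hh0 h1
  obtain ⟨S3, c3, p3⟩ := quad_bad _ _ _ (hdiff ((lam + 1) ^ 2 * κ))
  obtain ⟨S4, c4, p4⟩ := quad_bad _ _ _ (hdiff ((lam + 1) ^ 2 * κ + hh * δ ^ 2))
  obtain ⟨μ, hμ⟩ := exists_notMem_of_card_lt (S1 ∪ S2 ∪ S3 ∪ S4) (by
    have e1 := Finset.card_union_le (S1 ∪ S2 ∪ S3) S4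
    have e2 := Finset.card_union_le (S1 ∪ S2) S3
    have e3 := Finset.card_union_le S1 S2
    omega)
  simp only [Finset.mem_union, not_or] at hμ
  obtain ⟨⟨⟨μ1, μ2⟩, μ3⟩, μ4⟩ := hμ
  obtain ⟨y, hy⟩ := exists_sq ((κ + ε * μ ^ 2 + ε ^ 2 * μ) / hh)
  have hy' : hh * y ^ 2 = κ + ε * μ ^ 2 + ε ^ 2 * μ := by
    rw [hy, mul_div_cancel₀ _ hh0]
  obtain ⟨v, hv⟩ : ∃ v, v = lam * y + μ := ⟨_, rfl⟩
  have hyT : y ∉ T := fun hm => p1 μ μ1 y hm (by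
    linear_combination hh * y ^ 2 * h20 - hy')
  have hvB : v ∉ B := fun hm => p2 μ μ2 v hm (by
    rw [hv]
    linear_combination (hh * lam ^ 2 * y ^ 2 + hh * μ ^ 2 + hh * lam * y * μ) * h20 - lam ^ 2 * hy')
  have hvy : v ≠ y := by
    intro hvy
    have e : μ = v - lam * y := by rw [hv]; ring
    refine p3 μ μ3 ?_
    have e2 : (lam + 1) ^ 2 * y ^ 2 = μ ^ 2 := by
      rw [e, hvy]; linear_combination 2 * lam * y ^ 2 * h20
    linear_combination hh * (lam + 1) ^ 2 * y ^ 2 * h20 - (lam + 1) ^ 2 * hy' - hh * e2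
  have hvy' : v ≠ y + δ := by
    intro hvy
    have e : μ = y + δ - lam * y := by rw [← hvy, hv]; ring
    refine p4 μ μ4 ?_
    have e2 : (lam + 1) ^ 2 * y ^ 2 + δ ^ 2 = μ ^ 2 := by
      rw [e]; linear_combination (2 * lam * y ^ 2 - y * δ + lam * y * δ) * h20
    linear_combination (hh * (lam + 1) ^ 2 * y ^ 2 + hh * δ ^ 2) * h20 - (lam + 1) ^ 2 * hy'
      - hh * e2
  have k1 : y ∉ B := fun h => hyT (hBT h)
  have k2 : y + δ ∉ insert y B := by
    rw [Finset.mem_insert, not_or]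
    refine ⟨fun h => hδ (by linear_combination h), fun h => hyT ?_⟩
    have := hT _ (hBT h)
    rwa [show y + δ + δ = y by linear_combination δ * h20] at this
  have k3 : v ∉ insert (y + δ) (insert y B) := by
    simp only [Finset.mem_insert, not_or]
    exact ⟨hvy', hvy, hvB⟩
  have key : δ * (y ^ 2 + δ * y) + ε * (v ^ 2 + ε * v) = κ := by
    rw [hv]
    linear_combination hy' + y * hlam + y ^ 2 * hhdef
      + (ε * lam * y * μ + δ ^ 2 * y + ε * μ ^ 2 + ε ^ 2 * μ) * h20
  refine ⟨insert v (insert (y + δ) (insert y B)), v + ε, ?_, ?_, ?_⟩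
  · rw [Finset.card_insert_of_notMem k3, Finset.card_insert_of_notMem k2,
      Finset.card_insert_of_notMem k1, hB]
  · rw [Finset.sum_insert k3, Finset.sum_insert k2, Finset.sum_insert k1]
    linear_combination hs + (y + v) * h20
  · rw [rootPoly_insert k3, rootPoly_insert k2, rootPoly_insert k1]
    obtain ⟨p, hp⟩ : ∃ p, p = y ^ 2 + δ * y := ⟨_, rfl⟩
    obtain ⟨p', hp'⟩ : ∃ p', p' = v ^ 2 + ε * v := ⟨_, rfl⟩
    have : (X + C v) * ((X + C (y + δ)) * ((X + C y) * rootPoly B)) * (X + C (v + ε))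
        = rootPoly B * (X ^ 4 + C (δ + ε) * X ^ 3) + C (δ * ε + p + p') * (rootPoly B * X ^ 2)
          + C (δ * p' + ε * p) * (rootPoly B * X) + C (p * p') * rootPoly B := by
      have h2X : (2 : F[X]) = 0 := CharTwo.two_eq_zero
      have e1 : (X + C (y + δ)) * (X + C y) = X ^ 2 + C δ * X + C p := by
        simp only [hp, C_add, C_mul, C_pow]
        linear_combination X * C y * h2X
      have e2 : (X + C v) * (X + C (v + ε)) = X ^ 2 + C ε * X + C p' := by
        simp only [hp', C_add, C_mul, C_pow]
        linear_combination X * C v * h2X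
      rw [show (X + C v) * ((X + C (y + δ)) * ((X + C y) * rootPoly B)) * (X + C (v + ε))
        = rootPoly B * ((X + C (y + δ)) * (X + C y)) * ((X + C v) * (X + C (v + ε))) by ring,
        e1, e2]
      simp only [C_add, C_mul]
      ring
    rw [this]
    rw [map_add, map_add, map_add, map_C_mul, map_C_mul, map_C_mul, l0, l1, l2]
    rw [← hp, ← hp'] at key
    have hs' : M (X ^ (n + 2)) + (∑ b ∈ B, b) * σ = (δ + ε) * σ := by
      linear_combination hτ + σ * hs - (c * σ) * h20 + (c - δ - ε) * σ * h20
    rw [hs']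
    linear_combination σ * key - hκ + (κ + ε * p + δ * p') * σ * h20

/-- The existence of good roots. If `M` is nonzero somewhere in degree at most `n`, the greedy choice
applies. Otherwise only the values in degrees `n + 1` and `n + 2` matter, and the double-root
argument fails exactly when they have ratio `c`. -/
theorem core [CharP F 2] [Fintype F] (M : F[X] →ₗ[F] F) (c : F) (hc : c ≠ 0) (n : ℕ)
    (hn : 4 * n + 12 ≤ Fintype.card F) (h : ∃ i ≤ n + 2, M (X ^ i) ≠ 0) :
    HasGoodRoots M c n := by
  classical
  have h20 : (2 : F) = 0 := CharTwo.two_eq_zero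
  have hsum : ∀ B : Finset F, ∑ b ∈ B, b + (c + ∑ b ∈ B, b) = c := fun B => by
    linear_combination (∑ b ∈ B, b) * h20
  have hdel : ∀ B : Finset F, ∑ b ∈ B, b ≠ c → c + ∑ b ∈ B, b ≠ 0 := fun B hB h0 =>
    hB (by linear_combination h0 - c * h20)
  by_cases hlow : ∃ i ≤ n, M (X ^ i) ≠ 0
  · obtain ⟨B, hB, hs, ⟨i, hi, h0⟩, he⟩ := exists_generic M c hc n (by omega) hlow n 0 rfl
    obtain rfl : i = 0 := by omega
    refine good_of_generic M c n hn B hB (c + ∑ b ∈ B, b) (hdel B hs) (hsum B) _ _ _ _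
      rfl rfl rfl rfl (fun h => h0 (by simpa using h.1)) ?_
    rintro e heB ⟨h1, -⟩
    obtain ⟨i, hi, hne⟩ := he e heB
    obtain rfl : i = 0 := by omega
    apply hne
    rw [CharTwo.add_sq, pow_zero, mul_one, mul_add, map_add, ← C_pow, mul_comm _ (C _), map_C_mul]
    exact h1
  · push Not at hlow
    by_cases hm1 : M (X ^ (n + 2)) + c * M (X ^ (n + 1)) = 0
    · refine good_of_cubic M c hc n hn hlow ?_ hm1
      intro h0
      obtain ⟨i, hi, hne⟩ := h
      rcases Nat.lt_or_ge n i with h1 | h1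
      · rcases (by omega : i = n + 1 ∨ i = n + 2) with rfl | rfl
        · exact hne h0
        · exact hne (by simpa [h0] using hm1)
      · exact hne (hlow i h1)
    · obtain ⟨B, hB, hs, hne⟩ : ∃ B : Finset F, B.card = n ∧ ∑ b ∈ B, b ≠ c ∧
          (B.Nonempty → M (X ^ (n + 2)) + (∑ b ∈ B, b) * M (X ^ (n + 1)) ≠ 0) := by
        rcases Nat.eq_zero_or_pos n with rfl | hpos
        · exact ⟨∅, rfl, by simpa using hc.symm, by simp⟩
        · obtain ⟨S, cS, pS⟩ := lin_bad (M (X ^ (n + 1))) (M (X ^ (n + 2)))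
            (fun h => hm1 (by rw [h.1, h.2]; ring))
          obtain ⟨B, hB, hBS⟩ := exists_card_sum_avoid n hpos (insert c S)
            (by have := Finset.card_insert_le c S; omega)
          rw [Finset.mem_insert, not_or] at hBS
          exact ⟨B, hB, hBS.1, fun _ h => pS _ hBS.2 (by linear_combination h)⟩
      obtain ⟨l0, l1, l2⟩ := low_values M n hlow B hB
      refine good_of_generic M c n hn B hB (c + ∑ b ∈ B, b) (hdel B hs) (hsum B) _ _ _ _
        rfl rfl rfl rfl ?_ ?_
      · rintro ⟨-, h1⟩
        apply hm1
        rw [mul_add, map_add, l2, show rootPoly B * (C (c + ∑ b ∈ B, b) * X)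
          = C (c + ∑ b ∈ B, b) * (rootPoly B * X) by ring, map_C_mul, l1] at h1
        linear_combination h1 - (∑ b ∈ B, b) * M (X ^ (n + 1)) * h20
      · rintro e he ⟨h1, -⟩
        refine hne ⟨e, he⟩ ?_
        rw [l0, l2] at h1
        linear_combination h1

/-! ### Twisted codes, syndromes and distances -/

/-- `S_{k,θ}` is the space of polynomials of degree at most `k` whose two top coefficients satisfy
the twist relation. -/
theorem mem_Sset_iff (k : ℕ) (hk : 1 ≤ k) (θ : F) (p : F[X]) :
    p ∈ Sset F k θ ↔ p.natDegree ≤ k ∧ p.coeff k = θ * p.coeff (k - 1) := by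
  obtain ⟨k, rfl⟩ : ∃ k', k = k' + 1 := ⟨k - 1, by omega⟩
  simp only [Sset, Set.mem_ofPred_eq, Nat.add_sub_cancel]
  constructor
  · rintro ⟨f, rfl⟩
    constructor
    · refine natDegree_add_le_of_degree_le (natDegree_sum_le_of_forall_le _ _ fun i hi => ?_) ?_
      · exact (natDegree_C_mul_X_pow_le _ _).trans (by have := Finset.mem_range.1 hi; omega)
      · refine (natDegree_C_mul_le _ _).trans (natDegree_add_le_of_degree_le ?_ ?_)
        · exact (natDegree_X_pow_le _).trans (by omega)
        · exact natDegree_C_mul_X_pow_le _ _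
    · have h0 : ∀ j, k ≤ j → (∑ i ∈ Finset.range k, C (f i) * X ^ i : F[X]).coeff j = 0 := by
        intro j hj
        rw [finsetSum_coeff]
        refine Finset.sum_eq_zero fun i hi => ?_
        have := Finset.mem_range.1 hi
        rw [coeff_C_mul_X_pow, if_neg (by omega)]
      rw [coeff_add, coeff_add, h0 _ le_rfl, h0 _ (Nat.le_succ k)]
      rw [coeff_C_mul, coeff_C_mul, coeff_add, coeff_add, coeff_C_mul, coeff_C_mul]
      simp only [coeff_X_pow, Nat.succ_ne_self, (Nat.succ_ne_self k).symm, if_true, if_false]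
      simp [mul_comm]
  · rintro ⟨h1, h2⟩
    refine ⟨p.coeff, ?_⟩
    conv_lhs => rw [p.as_sum_range_C_mul_X_pow' (n := k + 2) (by omega)]
    rw [Finset.sum_range_succ, Finset.sum_range_succ, h2, C_mul]
    ring

/-- The sum of the values of a polynomial over the whole field picks out its coefficient at
`q - 1`; the top allowed exponent `q` contributes `∑ x ^ q = ∑ x = 0`. -/
theorem sum_eval [Fintype F] (p : F[X]) (hq : 2 < Fintype.card F)
    (hp : p.natDegree ≤ Fintype.card F) :
    ∑ x : F, p.eval x = - p.coeff (Fintype.card F - 1) := by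
  have hpow : ∀ i, i ≤ Fintype.card F →
      ∑ x : F, x ^ i = if i = Fintype.card F - 1 then -1 else 0 := by
    intro i hi
    split_ifs with h
    · classical
      have : ∀ x : F, x ^ i = 1 - if x = 0 then 1 else 0 := by
        intro x
        split_ifs with hx
        · rw [hx, zero_pow (by omega), sub_self]
        · rw [h, FiniteField.pow_card_sub_one_eq_one x hx, sub_zero]
      simp [this, Finset.sum_sub_distrib]
    · rcases Nat.lt_or_ge i (Fintype.card F - 1) with h1 | h1
      · exact FiniteField.sum_pow_lt_card_sub_one F i h1
      · rw [show i = Fintype.card F by omega]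
        simp only [FiniteField.pow_card]
        simpa using FiniteField.sum_pow_lt_card_sub_one F 1 (by omega)
  simp only [eval_eq_sum_range' (Nat.lt_succ_of_le hp)]
  rw [Finset.sum_comm]
  simp only [← Finset.mul_sum]
  rw [Finset.sum_congr rfl (fun i hi => by
    rw [hpow i (Nat.lt_succ_iff.1 (Finset.mem_range.1 hi))])]
  rw [Finset.sum_eq_single (Fintype.card F - 1)]
  · simp
  · intro i _ hi
    simp [hi]
  · intro h
    exact absurd (Finset.mem_range.2 (by omega)) h

section Distance

variable [DecidableEq F] {n : ℕ}

theorem distTo_le {G : Type*} [DecidableEq G] (u c : Fin n → G) (C : Set (Fin n → G))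
    (hc : c ∈ C) : distTo u C ≤ hammingDist u c :=
  Nat.sInf_le ⟨c, hc, rfl⟩

theorem exists_distTo {G : Type*} [DecidableEq G] (u : Fin n → G) (C : Set (Fin n → G))
    (hC : C.Nonempty) : ∃ c ∈ C, hammingDist u c = distTo u C := by
  obtain ⟨c, hc⟩ := hC
  exact Nat.sInf_mem (s := {d | ∃ c ∈ C, hammingDist u c = d}) ⟨_, c, hc, rfl⟩

theorem covRad_eq {G : Type*} [DecidableEq G] (C : Set (Fin n → G)) (r : ℕ)
    (h1 : ∀ u, distTo u C ≤ r) (h2 : ∃ u, distTo u C = r) : covRad C = r := by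
  have hle : ∀ d ∈ {d | ∃ u, distTo u C = d}, d ≤ r := by
    rintro d ⟨u, rfl⟩
    exact h1 u
  exact le_antisymm (csSup_le ⟨r, h2⟩ hle) (le_csSup ⟨r, hle⟩ h2)

end Distance

/-- The functional `f ↦ ∑ⱼ uⱼ f(αⱼ)`, recording the power sums `∑ⱼ uⱼ αⱼ ^ i` of the word `u`. -/
noncomputable def syndrome {n : ℕ} (α : Fin n → F) (u : Fin n → F) : F[X] →ₗ[F] F where
  toFun f := ∑ j, u j * f.eval (α j)
  map_add' f g := by simp [mul_add, Finset.sum_add_distrib]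
  map_smul' a f := by
    simp only [eval_smul, smul_eq_mul, RingHom.id_apply, Finset.mul_sum]
    exact Finset.sum_congr rfl fun j _ => by ring

theorem syndrome_apply {n : ℕ} (α : Fin n → F) (u : Fin n → F) (f : F[X]) :
    syndrome α u f = ∑ j, u j * f.eval (α j) := rfl

theorem syndrome_eval [Fintype F] {n : ℕ} (α : Fin n → F) (hα : Function.Bijective α)
    (hq : 2 < Fintype.card F) (p f : F[X]) (h : p.natDegree + f.natDegree ≤ Fintype.card F) :
    syndrome α (fun j => p.eval (α j)) f = - (p * f).coeff (Fintype.card F - 1) := by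
  rw [← sum_eval _ hq (natDegree_mul_le.trans h), syndrome_apply]
  simp only [← eval_mul]
  exact hα.sum_comp (fun x => (p * f).eval x)

theorem natDegree_lt_of_degree_lt (p : F[X]) {m : ℕ} (hm : 0 < m) (h : p.degree < (m : ℕ)) :
    p.natDegree < m := by
  by_cases h0 : p = 0
  · rwa [h0, natDegree_zero]
  · exact (natDegree_lt_iff_degree_lt h0).2 h

/-- A polynomial of degree below `s.card` through the values of a word at the points of `s`. -/
theorem exists_interp [DecidableEq F] {n : ℕ} (α : Fin n → F) (hα : Function.Bijective α)
    (u : Fin n → F) (s : Finset F) :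
    ∃ p : F[X], p.degree < s.card ∧ ∀ j, α j ∈ s → p.eval (α j) = u j := by
  have hinj : Set.InjOn (id : F → F) s := fun _ _ _ _ h => h
  let e := Equiv.ofBijective α hα
  refine ⟨Lagrange.interpolate s id (fun x => u (e.symm x)),
    Lagrange.degree_interpolate_lt _ hinj, fun j hj => ?_⟩
  have := Lagrange.eval_interpolate_at_node (fun x => u (e.symm x)) hinj hj
  rw [id] at this
  rw [this]
  congr 1
  exact e.symm_apply_apply j

theorem rootPoly_eval [CharP F 2] (D : Finset F) {x : F} (hx : x ∈ D) :
    (rootPoly D).eval x = 0 := by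
  rw [rootPoly, eval_prod]
  exact Finset.prod_eq_zero hx (by simpa using CharTwo.add_self_eq_zero x)

/-- If the syndrome functional of `u` kills `∏_{a ∈ D} (X + a) * (X + w)` with root sum `θ⁻¹`, then
`u` is a codeword up to errors at the points of `D`. -/
theorem distTo_le_of_good [CharP F 2] [Fintype F] [DecidableEq F] (q : ℕ) (hq : q = Fintype.card F)
    (hq8 : 8 ≤ q) (k n : ℕ) (hk : k + n + 4 = q) (hk1 : 1 ≤ k)
    (θ : F) (hθ : θ ≠ 0) (α : Fin q → F) (hα : Function.Bijective α) (u : Fin q → F)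
    (h : HasGoodRoots (syndrome α u) θ⁻¹ n) : distTo u (TRS α k θ) ≤ n + 3 := by
  obtain ⟨D, w, hD, hsum, hM⟩ := h
  obtain ⟨p, hp, hpu⟩ := exists_interp α hα u Dᶜ
  have hcard : Dᶜ.card = k + 1 := by rw [Finset.card_compl, ← hq, hD]; omega
  have hpk : p.natDegree ≤ k := by
    rw [hcard] at hp
    exact Nat.lt_succ_iff.1 (natDegree_lt_of_degree_lt p (Nat.succ_pos k) hp)
  have hpw : ∀ j, u j ≠ p.eval (α j) → α j ∈ D := by
    intro j hj
    by_contra hc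
    exact hj (hpu j (Finset.mem_compl.2 hc)).symm
  obtain ⟨R, h1, h2⟩ : ∃ R : F[X], R.natDegree ≤ n + 3 ∧
      X * (rootPoly D * (X + C w)) = X ^ (n + 5) + C θ⁻¹ * X ^ (n + 4) + R := by
    obtain ⟨R, h1, h3, h4⟩ := X_mul_rootPoly D
    rw [hD] at h1 h3 h4
    refine ⟨C (w * ∑ b ∈ D, b) * X ^ (n + 3) + X * R + C w * R, ?_, ?_⟩
    · exact natDegree_add_le_of_degree_le (natDegree_add_le_of_degree_le
        (natDegree_C_mul_X_pow_le _ _) h4) ((natDegree_C_mul_le _ _).trans h1)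
    · rw [show X * (rootPoly D * (X + C w)) = (X * rootPoly D) * (X + C w) by ring, h3, ← hsum]
      simp only [C_add, C_mul]
      ring
  have hMp : syndrome α (fun j => p.eval (α j)) (rootPoly D * (X + C w)) = 0 := by
    rw [← hM, syndrome_apply, syndrome_apply]
    refine Finset.sum_congr rfl fun j _ => ?_
    by_cases hj : u j = p.eval (α j)
    · rw [hj]
    · rw [eval_mul, rootPoly_eval D (hpw j hj)]
      simp
  have hQ : (rootPoly D * (X + C w)).natDegree ≤ n + 4 := by
    refine natDegree_mul_le.trans ?_
    rw [rootPoly_natDegree, natDegree_X_add_C, hD]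
  rw [syndrome_eval α hα (by omega) p _ (by omega), neg_eq_zero, ← coeff_X_mul,
    show Fintype.card F - 1 + 1 = k + (n + 4) by omega,
    show X * (p * (rootPoly D * (X + C w))) = p * (X * (rootPoly D * (X + C w))) by ring, h2,
    mul_add, mul_add, coeff_add, coeff_add,
    coeff_eq_zero_of_natDegree_lt (p := p * R) (natDegree_mul_le.trans_lt (by omega)),
    show p * (C θ⁻¹ * X ^ (n + 4)) = C θ⁻¹ * (p * X ^ (n + 4)) by ring, coeff_C_mul,
    coeff_mul_X_pow, show k + (n + 4) = (k - 1) + (n + 5) by omega, coeff_mul_X_pow] at hMp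
  have hcoef : p.coeff k = θ * p.coeff (k - 1) := by
    rw [add_zero, ← CharTwo.sub_eq_add, sub_eq_zero] at hMp
    rw [hMp, mul_inv_cancel_left₀ hθ]
  have hmem : (fun j => p.eval (α j)) ∈ TRS α k θ :=
    ⟨p, (mem_Sset_iff k hk1 θ p).2 ⟨hpk, hcoef⟩, rfl⟩
  refine (distTo_le _ _ _ hmem).trans ?_
  rw [← hD, hammingDist]
  refine Finset.card_le_card_of_injOn α (fun j hj => hpw j ?_) hα.1.injOn
  simpa using hj

/-- A word `a x ^ k + g` agrees with a codeword in at most `k` positions: the difference would be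
a polynomial of degree at most `k`, and it is nonzero because `x ^ k ∉ S_{k,θ}`. -/
theorem le_distTo [Fintype F] [DecidableEq F] (q : ℕ) (k : ℕ) (hk1 : 1 ≤ k)
    (θ : F) (α : Fin q → F) (hα : Function.Bijective α) (a : F) (ha : a ≠ 0)
    (g : F[X]) (hg : g ∈ Sset F k θ) :
    q - k ≤ distTo (fun j => (C a * X ^ k + g).eval (α j)) (TRS α k θ) := by
  obtain ⟨c, ⟨p, hp, rfl⟩, hc⟩ := exists_distTo (fun j => (C a * X ^ k + g).eval (α j))
    (TRS α k θ) ⟨_, g, hg, rfl⟩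
  rw [← hc]
  by_contra! hlt
  rw [mem_Sset_iff k hk1] at hp hg
  have hz : C a * X ^ k + g - p = 0 := by
    refine eq_zero_of_natDegree_lt_card_of_eval_eq_zero' _
      ((Finset.univ.filter fun j => (C a * X ^ k + g).eval (α j) = p.eval (α j)).image α) ?_ ?_
    · intro x hx
      obtain ⟨j, hj, rfl⟩ := Finset.mem_image.1 hx
      rw [eval_sub, (Finset.mem_filter.1 hj).2, sub_self]
    · rw [Finset.card_image_of_injective _ hα.1]
      have h1 := Finset.card_filter_add_card_filter_not (s := (Finset.univ : Finset (Fin q)))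
        (fun j => (C a * X ^ k + g).eval (α j) = p.eval (α j))
      rw [Finset.card_univ, Fintype.card_fin] at h1
      rw [hammingDist] at hlt
      have h2 : (C a * X ^ k + g - p).natDegree ≤ k :=
        (natDegree_sub_le_of_le (natDegree_add_le_of_degree_le (natDegree_C_mul_X_pow_le _ _) hg.1)
          hp.1).trans (max_self k).le
      simp only [ne_eq] at hlt
      omega
  have e1 := congrArg (fun f => coeff f k) hz
  have e2 := congrArg (fun f => coeff f (k - 1)) hz
  simp only [coeff_sub, coeff_add, coeff_C_mul_X_pow, coeff_zero, if_true,
    if_neg (show ¬ k - 1 = k by omega), zero_add, hp.2, hg.2] at e1 e2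
  exact ha (by linear_combination e1 - θ * e2)

theorem distTo_le_of_low [CharP F 2] [Fintype F] [DecidableEq F] (q : ℕ)
    (hq : q = Fintype.card F) (k n : ℕ) (hk : k + n + 4 = q) (hn : 4 * n + 12 ≤ q) (hk1 : 1 ≤ k)
    (θ : F) (hθ : θ ≠ 0) (α : Fin q → F) (hα : Function.Bijective α) (u : Fin q → F)
    (h : ∃ i ≤ n + 2, syndrome α u (X ^ i) ≠ 0) : distTo u (TRS α k θ) ≤ n + 3 :=
  distTo_le_of_good q hq (by omega) k n hk hk1 θ hθ α hα u
    (core _ _ (inv_ne_zero hθ) n (hq ▸ hn) h)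

theorem TRS_nonempty {n : ℕ} (α : Fin n → F) (k : ℕ) (θ : F) : (TRS α k θ).Nonempty :=
  ⟨_, 0, ⟨fun _ => 0, by simp⟩, rfl⟩

/-- Altering one coordinate of a word makes the zeroth syndrome nonzero if it vanishes. -/
theorem distTo_le_all [CharP F 2] [Fintype F] [DecidableEq F] (q : ℕ)
    (hq : q = Fintype.card F) (k n : ℕ) (hk : k + n + 4 = q) (hn : 4 * n + 12 ≤ q) (hk1 : 1 ≤ k)
    (θ : F) (hθ : θ ≠ 0) (α : Fin q → F) (hα : Function.Bijective α) (u : Fin q → F) :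
    distTo u (TRS α k θ) ≤ n + 4 := by
  by_cases h : ∃ i ≤ n + 2, syndrome α u (X ^ i) ≠ 0
  · exact (distTo_le_of_low q hq k n hk hn hk1 θ hθ α hα u h).trans (by omega)
  · push Not at h
    have h0 := h 0 (by omega)
    let j0 : Fin q := ⟨0, by omega⟩
    have h1 : syndrome α (u + Pi.single j0 1) (X ^ 0) = 1 := by
      rw [syndrome_apply] at h0 ⊢
      simp only [pow_zero, eval_one, mul_one] at h0 ⊢
      simp [Finset.sum_add_distrib, h0]
    have h2 := distTo_le_of_low q hq k n hk hn hk1 θ hθ α hα (u + Pi.single j0 1)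
      ⟨0, by omega, by rw [h1]; exact one_ne_zero⟩
    obtain ⟨c, hc, hd⟩ := exists_distTo (u + Pi.single j0 1) (TRS α k θ) (TRS_nonempty α k θ)
    have h3 : hammingDist u (u + Pi.single j0 1) ≤ 1 := by
      rw [hammingDist, ← Finset.card_singleton j0]
      refine Finset.card_le_card fun j hj => ?_
      by_contra hne
      rw [Finset.mem_singleton] at hne
      simp [hne] at hj
    have h4 := hammingDist_triangle u (u + Pi.single j0 1) c
    have h5 := distTo_le u c _ hc
    omega

/-- If the power sums of `u` up to exponent `n + 2` vanish, its interpolating polynomial has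
degree at most `k`. Any such polynomial is congruent to a multiple of `x ^ k` modulo `S_{k,θ}`. -/
theorem eq_of_low_zero [Fintype F] [DecidableEq F] (q : ℕ) (hq : q = Fintype.card F) (k n : ℕ)
    (hk : k + n + 4 = q) (hk1 : 1 ≤ k)
    (θ : F) (α : Fin q → F) (hα : Function.Bijective α) (u : Fin q → F)
    (h : ∀ i ≤ n + 2, syndrome α u (X ^ i) = 0) :
    ∃ a : F, ∃ g ∈ Sset F k θ, u = fun j => (C a * X ^ k + g).eval (α j) := by
  obtain ⟨p, hp, hpu⟩ := exists_interp α hα u Finset.univ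
  rw [Finset.card_univ, ← hq] at hp
  have hp' : p.natDegree < q := natDegree_lt_of_degree_lt p (by omega) hp
  obtain rfl : u = fun j => p.eval (α j) := funext fun j => (hpu j (Finset.mem_univ _)).symm
  have hpk : p.natDegree ≤ k := by
    by_contra! hlt
    -- the syndrome paired with `X ^ i` for this `i` is minus the leading coefficient of `p`
    have := h (q - 1 - p.natDegree) (by omega)
    rw [syndrome_eval α hα (by omega) p _ (by rw [natDegree_X_pow]; omega), neg_eq_zero,
      show Fintype.card F - 1 = p.natDegree + (q - 1 - p.natDegree) by omega, coeff_mul_X_pow,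
      coeff_natDegree, leadingCoeff_eq_zero] at this
    rw [this, natDegree_zero] at hlt
    omega
  refine ⟨p.coeff k - θ * p.coeff (k - 1), p - C (p.coeff k - θ * p.coeff (k - 1)) * X ^ k,
    (mem_Sset_iff k hk1 θ _).2 ⟨(natDegree_sub_le_of_le hpk
      (natDegree_C_mul_X_pow_le _ _)).trans (max_self k).le, ?_⟩, ?_⟩
  · simp only [coeff_sub, coeff_C_mul_X_pow, if_true, if_neg (show ¬ k - 1 = k by omega)]
    ring
  · simp

end TRSDeepHoles

/-- Let `q = 2^m ≥ 8`, `3q - 4 ≤ 4k` and `k ≤ q - 4`. Then `u ∈ 𝔽_q^q`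
is a deep hole of `TRS_k(𝔽_q, θ)` iff `u = u_{a x^k + g}` for some `a ≠ 0` and
`g ∈ S_{k,θ}`. -/
theorem deep_holes_char_two {F : Type*} [Field F] [Fintype F] [DecidableEq F]
    (q m : ℕ) (hq : q = Fintype.card F) (hqm : q = 2 ^ m) (hq8 : 8 ≤ q)
    (k : ℕ) (hk3 : 3 * q - 4 ≤ 4 * k) (hk4 : k ≤ q - 4)
    (θ : F) (hθ : θ ≠ 0) (α : Fin q → F) (hα : Function.Bijective α) (u : Fin q → F) :
    IsDeepHole (TRS α k θ) u ↔
      ∃ a : F, a ≠ 0 ∧ ∃ g ∈ Sset F k θ,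
        u = fun j => (Polynomial.C a * Polynomial.X ^ k + g).eval (α j) := by
  have : CharP F 2 := by
    have : Fact (Nat.Prime 2) := ⟨Nat.prime_two⟩
    exact charP_of_card_eq_prime_pow (hq.symm.trans hqm)
  obtain ⟨n, hk⟩ : ∃ n, k + n + 4 = q := ⟨q - k - 4, by omega⟩
  have hn : 4 * n + 12 ≤ q := by omega
  have hk1 : 1 ≤ k := by omega
  have hall := TRSDeepHoles.distTo_le_all q hq k n hk hn hk1 θ hθ α hα
  have hhole : ∀ a : F, a ≠ 0 → ∀ g ∈ Sset F k θ,
      distTo (fun j => (Polynomial.C a * Polynomial.X ^ k + g).eval (α j)) (TRS α k θ) = n + 4 := by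
    intro a ha g hg
    have := TRSDeepHoles.le_distTo q k hk1 θ α hα a ha g hg
    exact le_antisymm (hall _) (by omega)
  have hrad : covRad (TRS α k θ) = n + 4 :=
    TRSDeepHoles.covRad_eq _ _ hall
      ⟨_, hhole 1 one_ne_zero 0 ((TRSDeepHoles.mem_Sset_iff k hk1 θ 0).2 (by simp))⟩
  rw [IsDeepHole, hrad]
  constructor
  · intro hu
    have hlow : ∀ i ≤ n + 2, TRSDeepHoles.syndrome α u (X ^ i) = 0 := by
      by_contra! hne
      have := TRSDeepHoles.distTo_le_of_low q hq k n hk hn hk1 θ hθ α hα u hne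
      omega
    obtain ⟨a, g, hg, rfl⟩ := TRSDeepHoles.eq_of_low_zero q hq k n hk hk1 θ α hα u hlow
    refine ⟨a, ?_, g, hg, rfl⟩
    -- for `a = 0` the word would be a codeword
    rintro rfl
    have hmem : (fun j => (C (0 : F) * X ^ k + g).eval (α j)) ∈ TRS α k θ :=
      ⟨g, hg, by simp⟩
    have := TRSDeepHoles.distTo_le (fun j => (C (0 : F) * X ^ k + g).eval (α j)) _ _ hmem
    rw [hammingDist_self] at this
    omega
  · rintro ⟨a, ha, g, hg, rfl⟩
    exact hhole a ha g hg
end
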